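/- arXiv:1910.10636 — 15 statements merged into one kernel-verified Lean document; each statement's English description precedes it below -/
import Mathlib

section
/- In the MDP-LP setting with the exit condition, there exists a unique vector z* ∈ ℝ^S such that A z* ≤ b and, for every vector δ ∈ ℝ^S with δ(s) > 0 for all s ∈ S, z* is the unique maximizer of δ·z over the set {z ∈ ℝ^S : A z ≤ b}. Moreover this z* satisfies 0 ≤ z*(s) ≤ 1 for all s ∈ S and the Bellman minimum equations z*(s) = min_{α ∈ Act(s)} ( ∑_{t ∈ S} P(s,α,t)·z*(t) + b(s,α) ) for all s ∈ S. -/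
/-!
The operator `T z s = min_α (∑ t, P s α t * z t + b s α)` is monotone and maps `[0,1]^S` to itself, and
`A z ≤ b` says exactly `z ≤ T z`. As in the Knaster–Tarski theorem, the pointwise supremum `z*` of
all `z ∈ [0,1]^S` with `z ≤ T z` is a fixed point of `T`; no exit condition is needed for this.

The exit condition gives that `z*` dominates every `z` with `z ≤ T z`, bounded or not. If `σ` picks
a minimizing action for `z*` in every state, then `d = z - z*` satisfies `d ≤ P_σ d`, and a maximum
principle (`nonpos_of_le_substochastic`) yields `d ≤ 0`: a positive maximum would propagate along
every path of `P_σ`, but it cannot be attained at a state where mass is lost. Being the greatest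
feasible point, `z*` is the unique maximizer of every positive objective, and this property
determines it.
-/

open Finset Filter

/-- Maximum principle for a substochastic matrix `Q` with mass loss `e`, where from every state
a state with positive mass loss is reachable: a function that is subharmonic is nonpositive. -/
lemma nonpos_of_le_substochastic {S : Type} [Fintype S] (Q : S → S → ℝ) (e : S → ℝ)
    (hQ : ∀ s t, 0 ≤ Q s t) (he : ∀ s, 0 ≤ e s) (hsum : ∀ s, (∑ t, Q s t) + e s = 1)
    (hexit : ∀ s : S, ∃ (k : ℕ) (path : ℕ → S), path 0 = s ∧
        (∀ i < k, 0 < Q (path i) (path (i + 1))) ∧ 0 < e (path k))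
    (d : S → ℝ) (hd : ∀ s, d s ≤ ∑ t, Q s t * d t) (s : S) : d s ≤ 0 := by
  have : Nonempty S := ⟨s⟩
  obtain ⟨m, hm⟩ := Finite.exists_max d
  refine (hm s).trans ?_
  by_contra! hpos
  obtain ⟨k, path, h0, hstep, hk⟩ := hexit m
  -- At a state where `d` is maximal, both nonnegative defects below must vanish.
  have key : ∀ x, d x = d m → e x * d m + ∑ t, Q x t * (d m - d t) ≤ 0 := by
    intro x hx
    have h1 := hd x
    have h2 : ∑ t, Q x t * (d m - d t) = (∑ t, Q x t) * d m - ∑ t, Q x t * d t := by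
      simp [mul_sub, Finset.sum_sub_distrib, Finset.sum_mul]
    rw [h2, eq_sub_of_add_eq (hsum x)]
    linarith
  have hnn : ∀ x t, 0 ≤ Q x t * (d m - d t) := fun x t =>
    mul_nonneg (hQ x t) (sub_nonneg.2 (hm t))
  have hpath : ∀ i ≤ k, d (path i) = d m := by
    intro i
    induction i with
    | zero => intro _; rw [h0]
    | succ i ih =>
      intro hi
      have h1 := key _ (ih (by omega))
      have h2 := Finset.single_le_sum (fun t _ => hnn (path i) t) (Finset.mem_univ (path (i + 1)))
      have h3 := mul_nonneg (he (path i)) hpos.le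
      have h4 := hstep i (by omega)
      have h5 := hm (path (i + 1))
      by_contra hne
      have h6 : 0 < d m - d (path (i + 1)) := sub_pos.2 (lt_of_le_of_ne h5 hne)
      have h7 := mul_pos h4 h6
      linarith
  have h1 := key _ (hpath k le_rfl)
  have h2 := Finset.sum_nonneg (fun t (_ : t ∈ Finset.univ) => hnn (path k) t)
  have h3 := mul_pos hk hpos
  linarith

theorem stmt_0
    {S Act : Type} [Fintype S] [DecidableEq S] [Nonempty S]
    [Fintype Act] [DecidableEq Act]
    (s0 : S) (En : S → Finset Act) (hEn : ∀ s, (En s).Nonempty)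
    (P : S → Act → S → ℝ) (b c : S → Act → ℝ)
    (hP : ∀ s, ∀ α ∈ En s, ∀ t, 0 ≤ P s α t)
    (hb : ∀ s, ∀ α ∈ En s, 0 ≤ b s α)
    (hc : ∀ s, ∀ α ∈ En s, 0 ≤ c s α)
    (hsum : ∀ s, ∀ α ∈ En s, (∑ t, P s α t) + b s α + c s α = 1)
    (hexit : ∀ σ : S → Act, (∀ s, σ s ∈ En s) →
      ∀ s : S, ∃ (k : ℕ) (path : ℕ → S), path 0 = s ∧
        (∀ i < k, 0 < P (path i) (σ (path i)) (path (i + 1))) ∧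
        0 < b (path k) (σ (path k)) + c (path k) (σ (path k))) :
    ∃ zstar : S → ℝ,
      ((∀ s, ∀ α ∈ En s, zstar s - ∑ t, P s α t * zstar t ≤ b s α) ∧
        (∀ δ : S → ℝ, (∀ s, 0 < δ s) →
          ∀ z : S → ℝ, (∀ s, ∀ α ∈ En s, z s - ∑ t, P s α t * z t ≤ b s α) →
            (∑ s, δ s * z s ≤ ∑ s, δ s * zstar s) ∧
            (∑ s, δ s * z s = ∑ s, δ s * zstar s → z = zstar))) ∧
      (∀ s, 0 ≤ zstar s ∧ zstar s ≤ 1) ∧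
      (∀ s, zstar s = (En s).inf' (hEn s) (fun α => (∑ t, P s α t * zstar t) + b s α)) ∧
      (∀ w : S → ℝ,
        ((∀ s, ∀ α ∈ En s, w s - ∑ t, P s α t * w t ≤ b s α) ∧
          (∀ δ : S → ℝ, (∀ s, 0 < δ s) →
            ∀ z : S → ℝ, (∀ s, ∀ α ∈ En s, z s - ∑ t, P s α t * z t ≤ b s α) →
              (∑ s, δ s * z s ≤ ∑ s, δ s * w s) ∧
              (∑ s, δ s * z s = ∑ s, δ s * w s → z = w))) → w = zstar) := by
  have mono : ∀ s, ∀ α ∈ En s, ∀ z w : S → ℝ, (∀ t, z t ≤ w t) →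
      ∑ t, P s α t * z t ≤ ∑ t, P s α t * w t := fun s α hα z w h =>
    Finset.sum_le_sum fun t _ => mul_le_mul_of_nonneg_left (h t) (hP s α hα t)
  let F : Set (S → ℝ) := {z | (∀ s, ∀ α ∈ En s, z s - ∑ t, P s α t * z t ≤ b s α) ∧
    ∀ s, 0 ≤ z s ∧ z s ≤ 1}
  have h0F : (fun _ => 0 : S → ℝ) ∈ F :=
    ⟨fun s α hα => by simpa using hb s α hα, fun s => ⟨le_rfl, zero_le_one⟩⟩
  let zs : S → ℝ := fun s => sSup ((fun z : S → ℝ => z s) '' F)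
  have hlub : ∀ s, IsLUB ((fun z : S → ℝ => z s) '' F) (zs s) := fun s =>
    isLUB_csSup ⟨_, _, h0F, rfl⟩ ⟨1, by rintro _ ⟨z, hz, rfl⟩; exact (hz.2 s).2⟩
  have hle : ∀ z ∈ F, ∀ s, z s ≤ zs s := fun z hz s => (hlub s).1 ⟨z, hz, rfl⟩
  have hub : ∀ s, ∀ a, (∀ z ∈ F, z s ≤ a) → zs s ≤ a := fun s a h =>
    (hlub s).2 (by rintro _ ⟨z, hz, rfl⟩; exact h z hz)
  have h01 : ∀ s, 0 ≤ zs s ∧ zs s ≤ 1 := fun s => ⟨hle _ h0F s, hub s 1 fun z hz => (hz.2 s).2⟩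
  have hfeas : ∀ s, ∀ α ∈ En s, zs s ≤ (∑ t, P s α t * zs t) + b s α := by
    intro s α hα
    refine hub s _ fun z hz => ?_
    have h1 := hz.1 s α hα
    have h2 := mono s α hα z zs (hle z hz)
    linarith
  have hbell : ∀ s, zs s = (En s).inf' (hEn s) (fun α => (∑ t, P s α t * zs t) + b s α) := by
    let T : S → ℝ := fun s => (En s).inf' (hEn s) (fun α => (∑ t, P s α t * zs t) + b s α)
    have hzT : ∀ s, zs s ≤ T s := fun s => Finset.le_inf' _ _ (hfeas s)
    have hTle : ∀ s, ∀ α ∈ En s, T s ≤ (∑ t, P s α t * zs t) + b s α := fun s α hα =>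
      Finset.inf'_le (fun α => (∑ t, P s α t * zs t) + b s α) hα
    have hTF : T ∈ F := by
      refine ⟨fun s α hα => ?_, fun s => ⟨(h01 s).1.trans (hzT s), ?_⟩⟩
      · have h1 := hTle s α hα
        have h2 := mono s α hα zs T hzT
        linarith
      · obtain ⟨α, hα⟩ := hEn s
        have h1 := hTle s α hα
        have h2 := mono s α hα zs (fun _ => 1) fun t => (h01 t).2
        have h3 := hsum s α hα
        have h4 := hc s α hα
        simp only [mul_one] at h2
        linarith
    exact fun s => le_antisymm (hzT s) (hle T hTF s)
  have hgreatest : ∀ z : S → ℝ, (∀ s, ∀ α ∈ En s, z s - ∑ t, P s α t * z t ≤ b s α) →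
      ∀ s, z s ≤ zs s := by
    intro z hz s
    have hmin : ∀ s, ∃ α ∈ En s, zs s = (∑ t, P s α t * zs t) + b s α := fun s => by
      obtain ⟨α, hα, h⟩ := Finset.exists_mem_eq_inf' (hEn s)
        (fun α => (∑ t, P s α t * zs t) + b s α)
      exact ⟨α, hα, (hbell s).trans h⟩
    choose σ hσ hσeq using hmin
    have := nonpos_of_le_substochastic (fun s t => P s (σ s) t)
      (fun s => b s (σ s) + c s (σ s)) (fun s t => hP s _ (hσ s) t)
      (fun s => add_nonneg (hb s _ (hσ s)) (hc s _ (hσ s)))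
      (fun s => by rw [← add_assoc]; exact hsum s _ (hσ s)) (hexit σ hσ)
      (fun s => z s - zs s)
      (fun s => by
        have h1 := hz s _ (hσ s)
        have h2 := hσeq s
        simp only [mul_sub, Finset.sum_sub_distrib]
        linarith) s
    linarith
  have hmax : ∀ δ : S → ℝ, (∀ s, 0 < δ s) →
      ∀ z : S → ℝ, (∀ s, ∀ α ∈ En s, z s - ∑ t, P s α t * z t ≤ b s α) →
        (∑ s, δ s * z s ≤ ∑ s, δ s * zs s) ∧
        (∑ s, δ s * z s = ∑ s, δ s * zs s → z = zs) := by
    intro δ hδ z hz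
    have hterm : ∀ s ∈ Finset.univ, δ s * z s ≤ δ s * zs s := fun s _ =>
      mul_le_mul_of_nonneg_left (hgreatest z hz s) (hδ s).le
    refine ⟨Finset.sum_le_sum hterm, fun heq => funext fun s => ?_⟩
    exact mul_left_cancel₀ (hδ s).ne' ((Finset.sum_eq_sum_iff_of_le hterm).1 heq s (mem_univ s))
  have hzs : ∀ s, ∀ α ∈ En s, zs s - ∑ t, P s α t * zs t ≤ b s α := fun s α hα => by
    linarith [hfeas s α hα]
  refine ⟨zs, ⟨hzs, hmax⟩, h01, hbell, fun w hw => ?_⟩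
  have hone : ∀ _ : S, (0 : ℝ) < 1 := fun _ => one_pos
  obtain ⟨h1, h2⟩ := hmax (fun _ => 1) hone w hw.1
  exact h2 (le_antisymm h1 (hw.2 (fun _ => 1) hone zs hzs).1)
end

section
/- In the MDP-LP setting with the exit condition, there exists a unique vector z* ∈ ℝ^S such that A z* ≥ b and, for every vector δ ∈ ℝ^S with δ(s) > 0 for all s ∈ S, z* is the unique minimizer of δ·z over the set {z ∈ ℝ^S : A z ≥ b}. Moreover this z* satisfies 0 ≤ z*(s) ≤ 1 for all s ∈ S and the Bellman maximum equations z*(s) = max_{α ∈ Act(s)} ( ∑_{t ∈ S} P(s,α,t)·z*(t) + b(s,α) ) for all s ∈ S. -/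
/-!
The constraint `A z ≥ b` says that `z` dominates its Bellman image. The vector `zs` is the
pointwise infimum of all feasible vectors. It is well defined because every feasible vector is
nonnegative (`feasible_nonneg`): at a negative minimum, feasibility forces all mass to stay on
minimal states, so no exit is reachable under any scheduler. Since `P ≥ 0`, the infimum is again
feasible, hence it is the least feasible vector, and so the unique minimizer of every strictly
positive objective. The constant vector `1` is feasible, which gives `zs ≤ 1`. Finally the
Bellman image of `zs` is itself feasible by monotonicity, so minimality yields the Bellman
equation.
-/

open Finset Filter

/-- Every feasible vector is nonnegative, by a minimum principle along a path to an exit. A single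
scheduler `σ` from which an exit is always reachable suffices. -/
theorem feasible_nonneg {S Act : Type} [Fintype S] [Nonempty S]
    (P : S → Act → S → ℝ) (b c : S → Act → ℝ) (σ : S → Act)
    (hP : ∀ s t, 0 ≤ P s (σ s) t) (hb : ∀ s, 0 ≤ b s (σ s)) (hc : ∀ s, 0 ≤ c s (σ s))
    (hsum : ∀ s, (∑ t, P s (σ s) t) + b s (σ s) + c s (σ s) = 1)
    (hexit : ∀ s : S, ∃ (k : ℕ) (path : ℕ → S), path 0 = s ∧
        (∀ i < k, 0 < P (path i) (σ (path i)) (path (i + 1))) ∧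
        0 < b (path k) (σ (path k)) + c (path k) (σ (path k)))
    (z : S → ℝ) (hz : ∀ s, b s (σ s) ≤ z s - ∑ t, P s (σ s) t * z t) (s : S) : 0 ≤ z s := by
  obtain ⟨m, hm⟩ := Finite.exists_min z
  refine le_trans ?_ (hm s)
  by_contra! hneg
  -- The excess of the one-step average over the minimum, which is a sum of nonnegative terms.
  have key : ∀ u, z u = z m →
      (∑ t, P u (σ u) t * (z t - z m)) ≤ z m * (b u (σ u) + c u (σ u)) := by
    intro u hu
    have h1 := hz u
    have h2 := hsum u
    have h3 := hb u
    have h4 : ∑ t, P u (σ u) t = 1 - b u (σ u) - c u (σ u) := by linarith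
    simp only [mul_sub, Finset.sum_sub_distrib, ← Finset.sum_mul]
    rw [h4]
    nlinarith
  have hterm : ∀ u t, 0 ≤ P u (σ u) t * (z t - z m) := fun u t =>
    mul_nonneg (hP u t) (sub_nonneg.2 (hm t))
  obtain ⟨k, path, h0, hstep, hlast⟩ := hexit m
  have hpath : ∀ i, i ≤ k → z (path i) = z m := by
    intro i
    induction i with
    | zero => intro _; rw [h0]
    | succ i ih =>
      intro hi
      have h1 := key _ (ih (by omega))
      have h2 := Finset.single_le_sum (f := fun t => P (path i) (σ (path i)) t * (z t - z m))
        (fun t _ => hterm (path i) t) (Finset.mem_univ (path (i + 1)))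
      have h3 := hstep i (by omega)
      have h4 := hm (path (i + 1))
      have h5 := mul_nonpos_of_nonpos_of_nonneg hneg.le
        (add_nonneg (hb (path i)) (hc (path i)))
      by_contra hne
      have h6 : 0 < z (path (i + 1)) - z m := sub_pos.2 (lt_of_le_of_ne h4 (Ne.symm hne))
      have h7 := mul_pos h3 h6
      linarith
  have h1 := key _ (hpath k le_rfl)
  have h2 := Finset.sum_nonneg (fun t (_ : t ∈ Finset.univ) => hterm (path k) t)
  have h3 := mul_neg_of_neg_of_pos hneg hlast
  linarith

theorem stmt_1
    {S Act : Type} [Fintype S] [DecidableEq S] [Nonempty S]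
    [Fintype Act] [DecidableEq Act]
    (s0 : S) (En : S → Finset Act) (hEn : ∀ s, (En s).Nonempty)
    (P : S → Act → S → ℝ) (b c : S → Act → ℝ)
    (hP : ∀ s, ∀ α ∈ En s, ∀ t, 0 ≤ P s α t)
    (hb : ∀ s, ∀ α ∈ En s, 0 ≤ b s α)
    (hc : ∀ s, ∀ α ∈ En s, 0 ≤ c s α)
    (hsum : ∀ s, ∀ α ∈ En s, (∑ t, P s α t) + b s α + c s α = 1)
    (hexit : ∀ σ : S → Act, (∀ s, σ s ∈ En s) →
      ∀ s : S, ∃ (k : ℕ) (path : ℕ → S), path 0 = s ∧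
        (∀ i < k, 0 < P (path i) (σ (path i)) (path (i + 1))) ∧
        0 < b (path k) (σ (path k)) + c (path k) (σ (path k))) :
    ∃ zstar : S → ℝ,
      ((∀ s, ∀ α ∈ En s, b s α ≤ zstar s - ∑ t, P s α t * zstar t) ∧
        (∀ δ : S → ℝ, (∀ s, 0 < δ s) →
          ∀ z : S → ℝ, (∀ s, ∀ α ∈ En s, b s α ≤ z s - ∑ t, P s α t * z t) →
            (∑ s, δ s * zstar s ≤ ∑ s, δ s * z s) ∧
            (∑ s, δ s * z s = ∑ s, δ s * zstar s → z = zstar))) ∧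
      (∀ s, 0 ≤ zstar s ∧ zstar s ≤ 1) ∧
      (∀ s, zstar s = (En s).sup' (hEn s) (fun α => (∑ t, P s α t * zstar t) + b s α)) ∧
      (∀ w : S → ℝ,
        ((∀ s, ∀ α ∈ En s, b s α ≤ w s - ∑ t, P s α t * w t) ∧
          (∀ δ : S → ℝ, (∀ s, 0 < δ s) →
            ∀ z : S → ℝ, (∀ s, ∀ α ∈ En s, b s α ≤ z s - ∑ t, P s α t * z t) →
              (∑ s, δ s * w s ≤ ∑ s, δ s * z s) ∧
              (∑ s, δ s * z s = ∑ s, δ s * w s → z = w))) → w = zstar) := by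
  have hEn' : ∀ s, ∃ α, α ∈ En s := hEn
  choose σ hσ using hEn'
  have hnn : ∀ z : S → ℝ, (∀ s, ∀ α ∈ En s, b s α ≤ z s - ∑ t, P s α t * z t) →
      ∀ s, 0 ≤ z s := fun z hz =>
    feasible_nonneg P b c σ (fun s => hP s _ (hσ s)) (fun s => hb s _ (hσ s))
      (fun s => hc s _ (hσ s)) (fun s => hsum s _ (hσ s)) (hexit σ hσ) z
      (fun s => hz s _ (hσ s))
  have hone : ∀ s, ∀ α ∈ En s, b s α ≤ (1 : ℝ) - ∑ t, P s α t * 1 := by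
    intro s α hα
    have h1 := hsum s α hα
    have h2 := hc s α hα
    simp only [mul_one]
    linarith
  let F := {z : S → ℝ // ∀ s, ∀ α ∈ En s, b s α ≤ z s - ∑ t, P s α t * z t}
  have : Nonempty F := ⟨⟨fun _ => 1, hone⟩⟩
  obtain ⟨zs, hzs⟩ : ∃ zs : S → ℝ, zs = fun s => ⨅ z : F, z.1 s := ⟨_, rfl⟩
  have hle : ∀ z : S → ℝ, (∀ s, ∀ α ∈ En s, b s α ≤ z s - ∑ t, P s α t * z t) →
      ∀ s, zs s ≤ z s := by
    intro z hz s
    rw [hzs]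
    exact ciInf_le (f := fun z : F => z.1 s) ⟨0, by rintro _ ⟨y, rfl⟩; exact hnn y.1 y.2 s⟩ ⟨z, hz⟩
  have hmono : ∀ s, ∀ α ∈ En s, ∀ x y : S → ℝ, (∀ t, x t ≤ y t) →
      ∑ t, P s α t * x t ≤ ∑ t, P s α t * y t := fun s α hα x y h =>
    Finset.sum_le_sum fun t _ => mul_le_mul_of_nonneg_left (h t) (hP s α hα t)
  have hfeas : ∀ s, ∀ α ∈ En s, b s α ≤ zs s - ∑ t, P s α t * zs t := by
    intro s α hα
    have h : b s α + ∑ t, P s α t * zs t ≤ zs s := by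
      conv_rhs => rw [hzs]
      refine le_ciInf fun z => ?_
      have h1 := z.2 s α hα
      have h2 := hmono s α hα zs z.1 (hle z.1 z.2)
      linarith
    linarith
  have hmin : ∀ δ : S → ℝ, (∀ s, 0 < δ s) →
      ∀ z : S → ℝ, (∀ s, ∀ α ∈ En s, b s α ≤ z s - ∑ t, P s α t * z t) →
        (∑ s, δ s * zs s ≤ ∑ s, δ s * z s) ∧
        (∑ s, δ s * z s = ∑ s, δ s * zs s → z = zs) := by
    intro δ hδ z hz
    have hterm : ∀ s ∈ Finset.univ, δ s * zs s ≤ δ s * z s := fun s _ =>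
      mul_le_mul_of_nonneg_left (hle z hz s) (hδ s).le
    refine ⟨Finset.sum_le_sum hterm, fun heq => ?_⟩
    funext s
    have h := (Finset.sum_eq_sum_iff_of_le hterm).1 heq.symm s (Finset.mem_univ s)
    exact (mul_left_cancel₀ (hδ s).ne' h).symm
  refine ⟨zs, ⟨hfeas, hmin⟩, fun s => ⟨hnn zs hfeas s, hle _ hone s⟩, ?_, ?_⟩
  · obtain ⟨T, hT⟩ : ∃ T : S → ℝ, T = fun s => (En s).sup' ⟨σ s, hσ s⟩
        (fun α => (∑ t, P s α t * zs t) + b s α) := ⟨_, rfl⟩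
    have hTle : ∀ s, T s ≤ zs s := by
      intro s
      rw [hT]
      refine Finset.sup'_le _ _ fun α hα => ?_
      have := hfeas s α hα
      linarith
    have hTfeas : ∀ s, ∀ α ∈ En s, b s α ≤ T s - ∑ t, P s α t * T t := by
      intro s α hα
      have h1 : (∑ t, P s α t * zs t) + b s α ≤ T s := by
        rw [hT]
        exact Finset.le_sup' (fun α => (∑ t, P s α t * zs t) + b s α) hα
      have h2 := hmono s α hα T zs hTle
      linarith
    intro s
    have h := le_antisymm (hle T hTfeas s) (hTle s)
    rw [h, hT]
  · rintro w ⟨hw, hwmin⟩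
    have h1 := (hmin (fun _ => 1) (fun _ => one_pos) w hw)
    have h2 := (hwmin (fun _ => 1) (fun _ => one_pos) zs hfeas).1
    exact h1.2 (le_antisymm h2 h1.1)
end

section
/- In the MDP-LP setting with the exit condition, the set {z ∈ ℝ^S : A z ≤ b} has a pointwise greatest element, i.e., there exists z* with A z* ≤ b and z ≤ z* (entrywise) for every z ∈ ℝ^S with A z ≤ b; dually, the set {z ∈ ℝ^S : A z ≥ b} has a pointwise least element, i.e., there exists w* with A w* ≥ b and w* ≤ z for every z ∈ ℝ^S with A z ≥ b. -/
/-!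
Fix any scheduler `σ`. The maximum principle `max_principle` says that a vector `u` with
`u ≤ P_σ u` is nonpositive: a positive maximum would propagate along every transition of positive
probability, hence reach a state where `P_σ` loses mass, which is impossible at a maximum.

Applied to `u = z - 1` it gives `z ≤ 1` whenever `A z ≤ b`, and applied to `u = -z` it gives
`z ≥ 0` whenever `A z ≥ b`. Since `0` satisfies the first system and the constant `1` the second,
the pointwise supremum, respectively infimum, of the solution set exists. It is again a solution,
because `P` is monotone: `A z ≤ b` reads `z ≤ b + P z`, and `A z ≥ b` reads `z ≥ b + P z`.
-/

open Finset Filter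

/-- Maximum principle for a substochastic matrix `Q` from whose every state a state of row sum
less than `1` (positive defect `d`) is reachable: subharmonic vectors are nonpositive. -/
theorem max_principle {S : Type} [Fintype S] [Nonempty S]
    (Q : S → S → ℝ) (d : S → ℝ) (hQ : ∀ s t, 0 ≤ Q s t) (hd : ∀ s, 0 ≤ d s)
    (hsum : ∀ s, (∑ t, Q s t) + d s = 1)
    (hexit : ∀ s : S, ∃ (k : ℕ) (path : ℕ → S), path 0 = s ∧
      (∀ i < k, 0 < Q (path i) (path (i + 1))) ∧ 0 < d (path k))
    (u : S → ℝ) (hu : ∀ s, u s ≤ ∑ t, Q s t * u t) : ∀ s, u s ≤ 0 := by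
  obtain ⟨m, hm⟩ := Finite.exists_max u
  by_contra! hcon
  obtain ⟨s, hs⟩ := hcon
  have hpos : 0 < u m := hs.trans_le (hm s)
  -- At a maximum, both the lost mass and the average shortfall below the maximum vanish.
  have key : ∀ x, u x = u m → d x * u m + ∑ t, Q x t * (u m - u t) ≤ 0 := by
    intro x hx
    have h1 := hu x
    have h2 : ∑ t, Q x t * (u m - u t) = (∑ t, Q x t) * u m - ∑ t, Q x t * u t := by
      simp only [mul_sub, Finset.sum_sub_distrib, Finset.sum_mul]
    have h3 : ∑ t, Q x t = 1 - d x := by linarith [hsum x]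
    rw [h2, h3]
    linarith
  have hnn : ∀ x t, 0 ≤ Q x t * (u m - u t) :=
    fun x t => mul_nonneg (hQ x t) (sub_nonneg.2 (hm t))
  obtain ⟨k, path, h0, hstep, hk⟩ := hexit m
  have hmax : ∀ i ≤ k, u (path i) = u m := by
    intro i
    induction i with
    | zero => intro _; rw [h0]
    | succ i ih =>
      intro hi
      have h1 := key _ (ih (by omega))
      have h2 := Finset.single_le_sum (fun t _ => hnn (path i) t)
        (Finset.mem_univ (path (i + 1)))
      have h3 := mul_nonneg (hd (path i)) hpos.le
      by_contra hne
      have h4 := mul_pos (hstep i (by omega)) (sub_pos.2 (lt_of_le_of_ne (hm _) hne))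
      linarith
  have h1 := key _ (hmax k le_rfl)
  have h2 := Finset.sum_nonneg (fun t (_ : t ∈ Finset.univ) => hnn (path k) t)
  have h3 := mul_pos hk hpos
  linarith

theorem stmt_2
    {S Act : Type} [Fintype S] [DecidableEq S] [Nonempty S]
    [Fintype Act] [DecidableEq Act]
    (s0 : S) (En : S → Finset Act) (hEn : ∀ s, (En s).Nonempty)
    (P : S → Act → S → ℝ) (b c : S → Act → ℝ)
    (hP : ∀ s, ∀ α ∈ En s, ∀ t, 0 ≤ P s α t)
    (hb : ∀ s, ∀ α ∈ En s, 0 ≤ b s α)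
    (hc : ∀ s, ∀ α ∈ En s, 0 ≤ c s α)
    (hsum : ∀ s, ∀ α ∈ En s, (∑ t, P s α t) + b s α + c s α = 1)
    (hexit : ∀ σ : S → Act, (∀ s, σ s ∈ En s) →
      ∀ s : S, ∃ (k : ℕ) (path : ℕ → S), path 0 = s ∧
        (∀ i < k, 0 < P (path i) (σ (path i)) (path (i + 1))) ∧
        0 < b (path k) (σ (path k)) + c (path k) (σ (path k))) :
    (∃ zstar : S → ℝ,
      (∀ s, ∀ α ∈ En s, zstar s - ∑ t, P s α t * zstar t ≤ b s α) ∧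
      (∀ z : S → ℝ, (∀ s, ∀ α ∈ En s, z s - ∑ t, P s α t * z t ≤ b s α) →
        ∀ s, z s ≤ zstar s)) ∧
    (∃ wstar : S → ℝ,
      (∀ s, ∀ α ∈ En s, b s α ≤ wstar s - ∑ t, P s α t * wstar t) ∧
      (∀ z : S → ℝ, (∀ s, ∀ α ∈ En s, b s α ≤ z s - ∑ t, P s α t * z t) →
        ∀ s, wstar s ≤ z s)) := by
  choose σ hσ using hEn
  have mp := max_principle (fun s t => P s (σ s) t) (fun s => b s (σ s) + c s (σ s))
    (fun s t => hP s _ (hσ s) t) (fun s => add_nonneg (hb s _ (hσ s)) (hc s _ (hσ s)))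
    (fun s => by linarith [hsum s _ (hσ s)]) (hexit σ hσ)
  have mono : ∀ s, ∀ α ∈ En s, ∀ y z : S → ℝ, (∀ t, y t ≤ z t) →
      ∑ t, P s α t * y t ≤ ∑ t, P s α t * z t := fun s α hα y z h =>
    Finset.sum_le_sum fun t _ => mul_le_mul_of_nonneg_left (h t) (hP s α hα t)
  constructor
  · set Z := {z : S → ℝ | ∀ s, ∀ α ∈ En s, z s - ∑ t, P s α t * z t ≤ b s α} with hZ
    have hle : ∀ z ∈ Z, ∀ s, z s ≤ 1 := by
      intro z hz s
      have h := mp (fun s => z s - 1) (fun s => by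
        have h1 := hz s _ (hσ s)
        have h2 := hsum s _ (hσ s)
        have h3 := hc s _ (hσ s)
        simp only [mul_sub, mul_one, Finset.sum_sub_distrib]
        linarith) s
      simpa using h
    have hne : Z.Nonempty := ⟨fun _ => 0, fun s α hα => by simpa using hb s α hα⟩
    have hlub : ∀ s, IsLUB ((fun z : S → ℝ => z s) '' Z) (sSup ((fun z : S → ℝ => z s) '' Z)) :=
      fun s => isLUB_csSup (hne.image _) ⟨1, by rintro _ ⟨z, hz, rfl⟩; exact hle z hz s⟩
    have hub : ∀ z ∈ Z, ∀ s, z s ≤ sSup ((fun z : S → ℝ => z s) '' Z) :=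
      fun z hz s => (hlub s).1 ⟨z, hz, rfl⟩
    refine ⟨fun s => sSup ((fun z : S → ℝ => z s) '' Z), fun s α hα => ?_, hub⟩
    rw [sub_le_iff_le_add]
    refine (hlub s).2 ?_
    rintro _ ⟨z, hz, rfl⟩
    have h1 := hz s α hα
    have h2 := mono s α hα _ _ (hub z hz)
    simp only
    linarith
  · set W := {z : S → ℝ | ∀ s, ∀ α ∈ En s, b s α ≤ z s - ∑ t, P s α t * z t} with hW
    have hge : ∀ z ∈ W, ∀ s, 0 ≤ z s := by
      intro z hz s
      have h := mp (fun s => -z s) (fun s => by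
        have h1 := hz s _ (hσ s)
        have h3 := hb s _ (hσ s)
        simp only [mul_neg, Finset.sum_neg_distrib]
        linarith) s
      simpa using h
    have hne : W.Nonempty := ⟨fun _ => 1, fun s α hα => by
      have h2 := hsum s α hα
      have h3 := hc s α hα
      simp only [mul_one]
      linarith⟩
    have hglb : ∀ s, IsGLB ((fun z : S → ℝ => z s) '' W) (sInf ((fun z : S → ℝ => z s) '' W)) :=
      fun s => isGLB_csInf (hne.image _) ⟨0, by rintro _ ⟨z, hz, rfl⟩; exact hge z hz s⟩
    have hlb : ∀ z ∈ W, ∀ s, sInf ((fun z : S → ℝ => z s) '' W) ≤ z s :=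
      fun z hz s => (hglb s).1 ⟨z, hz, rfl⟩
    refine ⟨fun s => sInf ((fun z : S → ℝ => z s) '' W), fun s α hα => ?_, hlb⟩
    rw [le_sub_iff_add_le]
    refine (hglb s).2 ?_
    rintro _ ⟨z, hz, rfl⟩
    have h1 := hz s α hα
    have h2 := mono s α hα _ _ (hlb z hz)
    simp only
    linarith
end

section
/- In the MDP-LP setting with the exit condition, for every real λ: (i) there exists y ∈ ℝ^M with y ≥ 0, yA ≥ δ_{s0} and y·b ≤ λ if and only if every z ∈ ℝ^S with A z ≤ b satisfies z(s0) ≤ λ; (ii) there exists y ∈ ℝ^M with y ≥ 0, yA ≥ δ_{s0} and y·b < λ if and only if every z ∈ ℝ^S with A z ≤ b satisfies z(s0) < λ. (Here yA ∈ ℝ^S is the row-vector–matrix product (yA)(t) = ∑_{(s,α)∈M} y(s,α)·A((s,α),t).) -/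
/-!
Linear programming duality for the MDP is proved here without Farkas' lemma, through an optimal
memoryless scheduler.

For a scheduler `σ`, the matrix `1 - P_σ` satisfies a maximum principle
(`Absorbing.nonpos_of_le`): `(1 - P_σ) x ≤ 0` forces `x ≤ 0`, because a positive maximum of `x`
would propagate along a path to a state where mass leaks out. Hence `1 - P_σ` is invertible with
entrywise nonnegative inverse (`Absorbing.exists_inverse`), and the system `(1 - P_σ) z = b_σ`
has a unique solution `z_σ ≥ 0`. Choose `σ` with `∑ s, z_σ s` minimal. If some enabled `(s, α)`
violated the inequality `A z_σ ≤ b`, switching `σ` to `α` at `s` would lower this sum, so `z_σ` is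
feasible; by the maximum principle it dominates every other feasible `z`
(`exists_optimal_scheduler`).

Row `s0` of `(1 - P_σ)⁻¹`, placed on the pairs `(s, σ s)`, is a `y ≥ 0` with `y A = δ_{s0}` and
`y · b = z_σ s0`. Conversely each dual feasible `y` has
`z_σ s0 ≤ (y A) z_σ ≤ y · b`, where the first step needs `z_σ ≥ 0`. So both sides of each
equivalence say that `z_σ s0 ≤ λ`, respectively `z_σ s0 < λ`.
-/

open Finset Filter

/-- A substochastic matrix `Q` in which every state has a path of positive entries to a state
whose row sum is less than `1`. -/
structure Absorbing {S : Type} [Fintype S] (Q : S → S → ℝ) : Prop where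
  nonneg : ∀ s t, 0 ≤ Q s t
  row_le : ∀ s, ∑ t, Q s t ≤ 1
  exit : ∀ s, ∃ (k : ℕ) (path : ℕ → S), path 0 = s ∧
    (∀ i < k, 0 < Q (path i) (path (i + 1))) ∧ ∑ t, Q (path k) t < 1

/-- Maximum principle: a subharmonic vector for an absorbing matrix is nonpositive. -/
lemma Absorbing.nonpos_of_le {S : Type} [Fintype S] {Q : S → S → ℝ} (hQ : Absorbing Q)
    (x : S → ℝ) (hx : ∀ s, x s ≤ ∑ t, Q s t * x t) (s : S) : x s ≤ 0 := by
  have : Nonempty S := ⟨s⟩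
  obtain ⟨m, hm⟩ := Finite.exists_max x
  by_contra! hs
  have hpos : 0 < x m := hs.trans_le (hm s)
  -- At a state where the maximum is attained, every deficit `Q u t * (x m - x t)` vanishes
  -- and the row sum is at least `1`.
  have key : ∀ u, x u = x m → (∀ t, 0 < Q u t → x t = x m) ∧ 1 ≤ ∑ t, Q u t := by
    intro u hu
    have hdef : ∀ t, 0 ≤ Q u t * (x m - x t) := fun t =>
      mul_nonneg (hQ.nonneg u t) (sub_nonneg.2 (hm t))
    have hsplit : ∑ t, Q u t * (x m - x t) = (∑ t, Q u t) * x m - ∑ t, Q u t * x t := by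
      simp only [mul_sub, Finset.sum_sub_distrib, Finset.sum_mul]
    have h1 := hx u
    have h2 : (∑ t, Q u t) * x m ≤ 1 * x m :=
      mul_le_mul_of_nonneg_right (hQ.row_le u) hpos.le
    have h3 : 0 ≤ ∑ t, Q u t * (x m - x t) := Finset.sum_nonneg fun t _ => hdef t
    constructor
    · intro t ht
      have h4 : Q u t * (x m - x t) ≤ ∑ t, Q u t * (x m - x t) :=
        Finset.single_le_sum (fun t _ => hdef t) (Finset.mem_univ t)
      have h5 : Q u t * (x m - x t) = 0 := le_antisymm (by linarith) (hdef t)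
      rcases mul_eq_zero.1 h5 with h | h <;> linarith
    · by_contra! h
      have : (∑ t, Q u t) * x m < 1 * x m := mul_lt_mul_of_pos_right h hpos
      linarith
  obtain ⟨k, path, h0, hstep, hk⟩ := hQ.exit m
  have hpath : ∀ i ≤ k, x (path i) = x m := by
    intro i
    induction i with
    | zero => intro _; rw [h0]
    | succ i ih => intro hi; exact (key _ (ih (by lia))).1 _ (hstep i (by lia))
  linarith [(key _ (hpath k le_rfl)).2]

/-- `1 - Q` has an entrywise nonnegative two-sided inverse `G`. -/
lemma Absorbing.exists_inverse {S : Type} [Fintype S] [DecidableEq S] {Q : S → S → ℝ}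
    (hQ : Absorbing Q) : ∃ G : Matrix S S ℝ,
      (1 - Matrix.of Q) * G = 1 ∧ G * (1 - Matrix.of Q) = 1 ∧ ∀ s t, 0 ≤ G s t := by
  have hmul : ∀ (x : S → ℝ) s, ((1 - Matrix.of Q).mulVec x) s = x s - ∑ t, Q s t * x t := by
    intro x s
    rw [Matrix.sub_mulVec, Matrix.one_mulVec]
    rfl
  have hunit : IsUnit (1 - Matrix.of Q) := by
    rw [← Matrix.mulVec_injective_iff_isUnit]
    intro x y hxy
    have hxy' : ∀ s, x s - ∑ t, Q s t * x t = y s - ∑ t, Q s t * y t := fun s => by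
      rw [← hmul, ← hmul]; exact congrFun hxy s
    funext s
    have h1 := hQ.nonpos_of_le (fun s => x s - y s) (fun s => by
      simp only [mul_sub, Finset.sum_sub_distrib]; linarith [hxy' s]) s
    have h2 := hQ.nonpos_of_le (fun s => y s - x s) (fun s => by
      simp only [mul_sub, Finset.sum_sub_distrib]; linarith [hxy' s]) s
    linarith
  have hdet := (Matrix.isUnit_iff_isUnit_det _).1 hunit
  refine ⟨(1 - Matrix.of Q)⁻¹, Matrix.mul_nonsing_inv _ hdet, Matrix.nonsing_inv_mul _ hdet, ?_⟩
  intro s t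
  -- Column `t` of the inverse is mapped to the nonnegative vector `δ_t`.
  have h := hQ.nonpos_of_le (fun s => -(1 - Matrix.of Q)⁻¹ s t) (fun u => by
    have h1 := hmul (fun s => (1 - Matrix.of Q)⁻¹ s t) u
    have h2 : ((1 - Matrix.of Q).mulVec (fun s => (1 - Matrix.of Q)⁻¹ s t)) u
        = (1 : Matrix S S ℝ) u t :=
      congrFun (congrFun (Matrix.mul_nonsing_inv _ hdet) u) t
    have h3 : (0 : ℝ) ≤ (1 : Matrix S S ℝ) u t := by
      rw [Matrix.one_apply]; split_ifs <;> norm_num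
    simp only [mul_neg, Finset.sum_neg_distrib]
    linarith) s
  linarith

/-- There are a scheduler `σ` and a nonnegative feasible `z` solving the equations of `σ`; `z` is
obtained by minimizing the total value over all schedulers. -/
lemma exists_optimal_scheduler {S Act : Type} [Fintype S] [DecidableEq S]
    [Finite Act] (En : S → Finset Act) (hEn : ∀ s, (En s).Nonempty)
    (P : S → Act → S → ℝ) (b : S → Act → ℝ)
    (hb : ∀ s, ∀ α ∈ En s, 0 ≤ b s α)
    (habs : ∀ σ : S → Act, (∀ s, σ s ∈ En s) → Absorbing fun s t => P s (σ s) t) :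
    ∃ (σ : S → Act) (z : S → ℝ), (∀ s, σ s ∈ En s) ∧ (∀ s, 0 ≤ z s) ∧
      (∀ s, z s - ∑ t, P s (σ s) t * z t = b s (σ s)) ∧
      (∀ s, ∀ α ∈ En s, z s - ∑ t, P s α t * z t ≤ b s α) := by
  have hsol : ∀ σ : {σ : S → Act // ∀ s, σ s ∈ En s}, ∃ z : S → ℝ,
      ∀ s, z s - ∑ t, P s (σ.1 s) t * z t = b s (σ.1 s) := by
    intro σ
    obtain ⟨G, hG, -, -⟩ := (habs σ.1 σ.2).exists_inverse
    refine ⟨G.mulVec fun s => b s (σ.1 s), fun s => ?_⟩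
    have h := congrFun (congrArg (fun N => Matrix.mulVec N fun s => b s (σ.1 s)) hG) s
    simp only [← Matrix.mulVec_mulVec, Matrix.one_mulVec, Matrix.sub_mulVec] at h
    exact h
  choose z hz using hsol
  have : Nonempty {σ : S → Act // ∀ s, σ s ∈ En s} :=
    ⟨⟨fun s => (hEn s).choose, fun s => (hEn s).choose_spec⟩⟩
  obtain ⟨σ, hσ⟩ := Finite.exists_min fun σ => ∑ s, z σ s
  refine ⟨σ.1, z σ, σ.2, ?_, hz σ, ?_⟩
  · intro s
    have h := (habs σ.1 σ.2).nonpos_of_le (fun s => -z σ s) (fun u => by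
      simp only [mul_neg, Finset.sum_neg_distrib]
      linarith [hz σ u, hb u _ (σ.2 u)]) s
    linarith
  · intro s α hα
    by_contra! hlt
    let τ : {σ : S → Act // ∀ s, σ s ∈ En s} := ⟨Function.update σ.1 s α, fun u => by
      by_cases hu : u = s
      · subst hu; simpa using hα
      · simpa [hu] using σ.2 u⟩
    have hτs : τ.1 s = α := Function.update_self ..
    have hsub : ∀ u, z τ u - z σ u ≤ ∑ t, P u (τ.1 u) t * (z τ t - z σ t) := by
      intro u
      have h1 := hz τ u
      simp only [mul_sub, Finset.sum_sub_distrib]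
      by_cases hu : u = s
      · subst hu; rw [hτs] at h1 ⊢; linarith
      · have hτu : τ.1 u = σ.1 u := Function.update_of_ne hu ..
        rw [hτu] at h1 ⊢
        linarith [hz σ u]
    have hle := (habs τ.1 τ.2).nonpos_of_le (fun u => z τ u - z σ u) hsub
    have hs : z τ s < z σ s := by
      have h1 := hz τ s
      rw [hτs] at h1
      have h2 : ∑ t, P s α t * (z τ t - z σ t) ≤ 0 :=
        Finset.sum_nonpos fun t _ => mul_nonpos_of_nonneg_of_nonpos
          (hτs ▸ (habs τ.1 τ.2).nonneg s t) (hle t)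
      simp only [mul_sub, Finset.sum_sub_distrib] at h2
      linarith
    have : ∑ u, z τ u < ∑ u, z σ u :=
      Finset.sum_lt_sum (fun u _ => by linarith [hle u]) ⟨s, Finset.mem_univ s, hs⟩
    exact absurd (hσ τ) (not_le.2 this)

/-- A sum weighted by a vector supported on the graph of a scheduler reduces to a sum over
states. -/
lemma sum_scheduler {S Act : Type} [Fintype S] [Fintype Act] [DecidableEq Act]
    (En : S → Finset Act) (σ : S → Act) (hσ : ∀ s, σ s ∈ En s)
    (g : S → ℝ) (f : S → Act → ℝ) :
    ∑ p : {p : S × Act // p.2 ∈ En p.1},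
      (if p.1.2 = σ p.1.1 then g p.1.1 else 0) * f p.1.1 p.1.2 = ∑ s, g s * f s (σ s) := by
  symm
  refine Finset.sum_of_injOn (fun s => ⟨(s, σ s), hσ s⟩) ?_ ?_ ?_ ?_
  · intro s _ t _ h
    exact congrArg (fun p : {p : S × Act // p.2 ∈ En p.1} => p.1.1) h
  · intro s _; simp
  · rintro ⟨⟨s, α⟩, hp⟩ _ hnot
    have : α ≠ σ s := by
      rintro rfl
      exact hnot ⟨s, by simp, rfl⟩
    simp [this]
  · intro s _; simp

theorem stmt_3
    {S Act : Type} [Fintype S] [DecidableEq S] [Nonempty S]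
    [Fintype Act] [DecidableEq Act]
    (s0 : S) (En : S → Finset Act) (hEn : ∀ s, (En s).Nonempty)
    (P : S → Act → S → ℝ) (b c : S → Act → ℝ)
    (hP : ∀ s, ∀ α ∈ En s, ∀ t, 0 ≤ P s α t)
    (hb : ∀ s, ∀ α ∈ En s, 0 ≤ b s α)
    (hc : ∀ s, ∀ α ∈ En s, 0 ≤ c s α)
    (hsum : ∀ s, ∀ α ∈ En s, (∑ t, P s α t) + b s α + c s α = 1)
    (hexit : ∀ σ : S → Act, (∀ s, σ s ∈ En s) →
      ∀ s : S, ∃ (k : ℕ) (path : ℕ → S), path 0 = s ∧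
        (∀ i < k, 0 < P (path i) (σ (path i)) (path (i + 1))) ∧
        0 < b (path k) (σ (path k)) + c (path k) (σ (path k))) :
    ∀ lam : ℝ,
      ((∃ y : {p : S × Act // p.2 ∈ En p.1} → ℝ,
          (∀ p, 0 ≤ y p) ∧
          (∀ t : S, (if s0 = t then (1 : ℝ) else 0) ≤
            ∑ p : {p : S × Act // p.2 ∈ En p.1},
              y p * ((if p.1.1 = t then (1 : ℝ) else 0) - P p.1.1 p.1.2 t)) ∧
          (∑ p : {p : S × Act // p.2 ∈ En p.1}, y p * b p.1.1 p.1.2) ≤ lam) ↔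
        (∀ z : S → ℝ, (∀ s, ∀ α ∈ En s, z s - ∑ t, P s α t * z t ≤ b s α) →
          z s0 ≤ lam)) ∧
      ((∃ y : {p : S × Act // p.2 ∈ En p.1} → ℝ,
          (∀ p, 0 ≤ y p) ∧
          (∀ t : S, (if s0 = t then (1 : ℝ) else 0) ≤
            ∑ p : {p : S × Act // p.2 ∈ En p.1},
              y p * ((if p.1.1 = t then (1 : ℝ) else 0) - P p.1.1 p.1.2 t)) ∧
          (∑ p : {p : S × Act // p.2 ∈ En p.1}, y p * b p.1.1 p.1.2) < lam) ↔
        (∀ z : S → ℝ, (∀ s, ∀ α ∈ En s, z s - ∑ t, P s α t * z t ≤ b s α) →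
          z s0 < lam)) := by
  have habs : ∀ σ : S → Act, (∀ s, σ s ∈ En s) → Absorbing fun s t => P s (σ s) t := by
    intro σ hσ
    refine ⟨fun s t => hP s _ (hσ s) t, fun s => ?_, fun s => ?_⟩
    · linarith [hsum s _ (hσ s), hb s _ (hσ s), hc s _ (hσ s)]
    · obtain ⟨k, path, h0, hstep, hk⟩ := hexit σ hσ s
      exact ⟨k, path, h0, hstep, by linarith [hsum (path k) _ (hσ (path k))]⟩
  obtain ⟨σ, z, hσ, hz0, hzσ, hzfeas⟩ := exists_optimal_scheduler En hEn P b hb habs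
  have hdom : ∀ w : S → ℝ, (∀ s, ∀ α ∈ En s, w s - ∑ t, P s α t * w t ≤ b s α) →
      w s0 ≤ z s0 := by
    intro w hw
    have h := (habs σ hσ).nonpos_of_le (fun s => w s - z s) (fun s => by
      simp only [mul_sub, Finset.sum_sub_distrib]
      linarith [hw s _ (hσ s), hzσ s]) s0
    linarith
  have hweak : ∀ y : {p : S × Act // p.2 ∈ En p.1} → ℝ, (∀ p, 0 ≤ y p) →
      (∀ t : S, (if s0 = t then (1 : ℝ) else 0) ≤
        ∑ p : {p : S × Act // p.2 ∈ En p.1},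
          y p * ((if p.1.1 = t then (1 : ℝ) else 0) - P p.1.1 p.1.2 t)) →
      z s0 ≤ ∑ p : {p : S × Act // p.2 ∈ En p.1}, y p * b p.1.1 p.1.2 := by
    intro y hy hyA
    calc z s0 = ∑ t, (if s0 = t then (1 : ℝ) else 0) * z t := by simp
      _ ≤ ∑ t, (∑ p : {p : S × Act // p.2 ∈ En p.1},
          y p * ((if p.1.1 = t then (1 : ℝ) else 0) - P p.1.1 p.1.2 t)) * z t :=
        Finset.sum_le_sum fun t _ => mul_le_mul_of_nonneg_right (hyA t) (hz0 t)
      _ = ∑ p : {p : S × Act // p.2 ∈ En p.1},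
          y p * (z p.1.1 - ∑ t, P p.1.1 p.1.2 t * z t) := by
        simp only [Finset.sum_mul]
        rw [Finset.sum_comm]
        refine Finset.sum_congr rfl fun p _ => ?_
        simp only [mul_assoc, ← Finset.mul_sum, sub_mul, Finset.sum_sub_distrib]
        simp
      _ ≤ _ := Finset.sum_le_sum fun p _ =>
        mul_le_mul_of_nonneg_left (hzfeas _ _ p.2) (hy p)
  have hstrong : ∃ y : {p : S × Act // p.2 ∈ En p.1} → ℝ, (∀ p, 0 ≤ y p) ∧
      (∀ t : S, (if s0 = t then (1 : ℝ) else 0) ≤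
        ∑ p : {p : S × Act // p.2 ∈ En p.1},
          y p * ((if p.1.1 = t then (1 : ℝ) else 0) - P p.1.1 p.1.2 t)) ∧
      ∑ p : {p : S × Act // p.2 ∈ En p.1}, y p * b p.1.1 p.1.2 = z s0 := by
    obtain ⟨G, -, hG, hG0⟩ := (habs σ hσ).exists_inverse
    refine ⟨fun p => if p.1.2 = σ p.1.1 then G s0 p.1.1 else 0, fun p => ?_, fun t => ?_, ?_⟩
    · dsimp only
      split_ifs
      exacts [hG0 _ _, le_rfl]
    · rw [sum_scheduler En σ hσ (G s0) fun s α => (if s = t then (1 : ℝ) else 0) - P s α t]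
      have h := congrFun (congrFun hG s0) t
      simp only [Matrix.mul_apply, Matrix.sub_apply, Matrix.one_apply, Matrix.of_apply] at h
      exact h.ge
    · rw [sum_scheduler En σ hσ (G s0) b]
      have h := congrFun (congrArg (fun N => Matrix.mulVec N z) hG) s0
      simp only [← Matrix.mulVec_mulVec, Matrix.one_mulVec] at h
      rw [← h]
      refine Finset.sum_congr rfl fun s _ => ?_
      rw [← hzσ s, Matrix.sub_mulVec, Matrix.one_mulVec]
      rfl
  obtain ⟨y, hy, hyA, hyb⟩ := hstrong
  intro lam
  refine ⟨⟨?_, fun h => ⟨y, hy, hyA, hyb.trans_le (h z hzfeas)⟩⟩,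
    ⟨?_, fun h => ⟨y, hy, hyA, hyb.trans_lt (h z hzfeas)⟩⟩⟩
  · rintro ⟨y', hy', hyA', hle⟩ w hw
    exact (hdom w hw).trans ((hweak y' hy' hyA').trans hle)
  · rintro ⟨y', hy', hyA', hlt⟩ w hw
    exact (hdom w hw).trans_lt ((hweak y' hy' hyA').trans_lt hlt)
end

section
/- In the MDP-LP setting with the exit condition, for every real λ: (i) there exists y ∈ ℝ^M with y ≥ 0, yA ≤ δ_{s0} and y·b ≥ λ if and only if every z ∈ ℝ^S with A z ≥ b satisfies z(s0) ≥ λ; (ii) there exists y ∈ ℝ^M with y ≥ 0, yA ≤ δ_{s0} and y·b > λ if and only if every z ∈ ℝ^S with A z ≥ b satisfies z(s0) > λ. (Here yA ∈ ℝ^S is the row-vector–matrix product (yA)(t) = ∑_{(s,α)∈M} y(s,α)·A((s,α),t).) -/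
/-!
Optimal solutions of the two linear programs are exhibited, both coming from one policy.

For a policy `σ` let `Q` be its substochastic transition matrix. The exit condition gives a minimum
principle (`nonneg_of_superharmonic`): `Q v ≤ v` forces `0 ≤ v`, because a negative minimum of `v`
would propagate along a path to a state where mass leaks out. Hence `1 - Q` is invertible with
a nonnegative inverse `N`. Choose `σ` maximising `∑ s, z_σ s`, where `z_σ = N b_σ`. If `z_σ` violated
a constraint at `(s, α)`, switching `σ` to `α` at `s` would increase `z_σ` strictly, so `z_σ` is
feasible for `A z ≥ b`. The row `N s0`, placed on the pairs `(s, σ s)`, is a feasible `y` with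
`y A = δ_{s0}` and `y · b = z_σ s0`. Weak duality (where `z ≥ 0` follows from the minimum principle)
then gives both equivalences.
-/

open Finset Filter

/-- Minimum principle for a substochastic matrix `Q` with leakage `e`, when leakage is reachable
from every state. -/
lemma nonneg_of_superharmonic {S : Type} [Fintype S] [Nonempty S]
    (Q : S → S → ℝ) (e : S → ℝ) (hQ : ∀ s t, 0 ≤ Q s t) (he : ∀ s, 0 ≤ e s)
    (hsum : ∀ s, (∑ t, Q s t) + e s = 1)
    (hex : ∀ s : S, ∃ (k : ℕ) (path : ℕ → S), path 0 = s ∧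
        (∀ i < k, 0 < Q (path i) (path (i + 1))) ∧ 0 < e (path k))
    (v : S → ℝ) (hv : ∀ s, ∑ t, Q s t * v t ≤ v s) : ∀ s, 0 ≤ v s := by
  obtain ⟨m, hm⟩ := Finite.exists_min v
  by_contra! hneg
  obtain ⟨r, hr⟩ := hneg
  have hm0 : v m < 0 := (hm r).trans_lt hr
  -- At a minimiser both the leakage term and the excess over the minimum vanish.
  have key : ∀ s, v s = v m → e s = 0 ∧ ∀ t, 0 < Q s t → v t = v m := by
    intro s hs
    have h1 := hv s
    have h2 : ∑ t, Q s t * (v t - v m) = ∑ t, Q s t * v t - (1 - e s) * v m := by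
      rw [← hsum s, add_sub_cancel_right, Finset.sum_mul, ← Finset.sum_sub_distrib]
      simp only [mul_sub]
    have h3 : ∀ t ∈ univ, 0 ≤ Q s t * (v t - v m) :=
      fun t _ => mul_nonneg (hQ s t) (sub_nonneg.2 (hm t))
    have h4 := Finset.sum_nonneg h3
    have h5 : e s * v m ≤ 0 := mul_nonpos_of_nonneg_of_nonpos (he s) hm0.le
    have h6 : e s * v m = 0 := by rw [h2] at h4; linarith
    have h7 : ∑ t, Q s t * (v t - v m) = 0 := by linarith
    refine ⟨(mul_eq_zero.1 h6).resolve_right hm0.ne, fun t ht => ?_⟩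
    have := (Finset.sum_eq_zero_iff_of_nonneg h3).1 h7 t (mem_univ t)
    exact sub_eq_zero.1 ((mul_eq_zero.1 this).resolve_left ht.ne')
  obtain ⟨k, path, h0, hstep, hk⟩ := hex m
  have hp : ∀ i ≤ k, v (path i) = v m := by
    intro i
    induction i with
    | zero => intro _; rw [h0]
    | succ i ih => exact fun hi => (key _ (ih (by omega))).2 _ (hstep i (by omega))
  exact hk.ne' (key _ (hp k le_rfl)).1

/-- The minimum principle makes `1 - Q` invertible with a nonnegative inverse. -/
lemma exists_nonneg_inverse {S : Type} [Fintype S] [DecidableEq S]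
    (Q : Matrix S S ℝ)
    (hpos : ∀ v : S → ℝ, (∀ s, ∑ t, Q s t * v t ≤ v s) → ∀ s, 0 ≤ v s) :
    ∃ N : Matrix S S ℝ, (∀ s t, 0 ≤ N s t) ∧ (1 - Q) * N = 1 ∧ N * (1 - Q) = 1 := by
  have hmv : ∀ (v : S → ℝ) s, ((1 - Q).mulVec v) s = v s - ∑ t, Q s t * v t := by
    intro v s
    rw [Matrix.sub_mulVec, Matrix.one_mulVec]; rfl
  have hinj : Function.Injective (1 - Q).mulVec := by
    intro v w hvw
    have h : ∀ s, v s - ∑ t, Q s t * v t = w s - ∑ t, Q s t * w t := by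
      intro s; rw [← hmv, ← hmv, hvw]
    funext s
    have h1 := hpos (fun t => v t - w t) (by
      intro s
      simp only [mul_sub, Finset.sum_sub_distrib]; linarith [h s]) s
    have h2 := hpos (fun t => w t - v t) (by
      intro s
      simp only [mul_sub, Finset.sum_sub_distrib]; linarith [h s]) s
    linarith
  have hu : IsUnit (1 - Q) := Matrix.mulVec_injective_iff_isUnit.1 hinj
  have hdet := (Matrix.isUnit_iff_isUnit_det _).1 hu
  refine ⟨(1 - Q)⁻¹, fun s t => ?_, Matrix.mul_nonsing_inv _ hdet, Matrix.nonsing_inv_mul _ hdet⟩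
  refine hpos (fun s => (1 - Q)⁻¹ s t) (fun s => ?_) s
  have h1 : ((1 - Q) * (1 - Q)⁻¹) s t = (1 : Matrix S S ℝ) s t := by
    rw [Matrix.mul_nonsing_inv _ hdet]
  have h2 : ((1 - Q) * (1 - Q)⁻¹) s t = (1 - Q)⁻¹ s t - ∑ r, Q s r * (1 - Q)⁻¹ r t :=
    hmv (fun r => (1 - Q)⁻¹ r t) s
  have h3 : 0 ≤ (1 : Matrix S S ℝ) s t := by
    rw [Matrix.one_apply]; split_ifs <;> norm_num
  linarith

/-- Sums over enabled pairs of a function supported on the graph of a policy. -/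
lemma sum_policy {S Act : Type} [Fintype S] [DecidableEq S] [Fintype Act] [DecidableEq Act]
    (En : S → Finset Act) (σ : S → Act) (hσ : ∀ s, σ s ∈ En s)
    (x : S → ℝ) (f : S → Act → ℝ) :
    ∑ p : {p : S × Act // p.2 ∈ En p.1},
      (if p.1.2 = σ p.1.1 then x p.1.1 else 0) * f p.1.1 p.1.2 = ∑ s, x s * f s (σ s) := by
  symm
  refine Finset.sum_of_injOn (fun s => (⟨(s, σ s), hσ s⟩ : {p : S × Act // p.2 ∈ En p.1}))
    ?_ ?_ ?_ ?_
  · intro s _ t _ h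
    simpa using congrArg (fun p => p.1.1) h
  · intro s _; simp
  · rintro ⟨⟨s, a⟩, h⟩ _ hn
    have : a ≠ σ s := by
      rintro rfl
      exact hn ⟨s, by simp, rfl⟩
    simp [this]
  · intro s _; simp

theorem stmt_4
    {S Act : Type} [Fintype S] [DecidableEq S] [Nonempty S]
    [Fintype Act] [DecidableEq Act]
    (s0 : S) (En : S → Finset Act) (hEn : ∀ s, (En s).Nonempty)
    (P : S → Act → S → ℝ) (b c : S → Act → ℝ)
    (hP : ∀ s, ∀ α ∈ En s, ∀ t, 0 ≤ P s α t)
    (hb : ∀ s, ∀ α ∈ En s, 0 ≤ b s α)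
    (hc : ∀ s, ∀ α ∈ En s, 0 ≤ c s α)
    (hsum : ∀ s, ∀ α ∈ En s, (∑ t, P s α t) + b s α + c s α = 1)
    (hexit : ∀ σ : S → Act, (∀ s, σ s ∈ En s) →
      ∀ s : S, ∃ (k : ℕ) (path : ℕ → S), path 0 = s ∧
        (∀ i < k, 0 < P (path i) (σ (path i)) (path (i + 1))) ∧
        0 < b (path k) (σ (path k)) + c (path k) (σ (path k))) :
    ∀ lam : ℝ,
      ((∃ y : {p : S × Act // p.2 ∈ En p.1} → ℝ,
          (∀ p, 0 ≤ y p) ∧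
          (∀ t : S, (∑ p : {p : S × Act // p.2 ∈ En p.1},
              y p * ((if p.1.1 = t then (1 : ℝ) else 0) - P p.1.1 p.1.2 t)) ≤
            (if s0 = t then (1 : ℝ) else 0)) ∧
          lam ≤ ∑ p : {p : S × Act // p.2 ∈ En p.1}, y p * b p.1.1 p.1.2) ↔
        (∀ z : S → ℝ, (∀ s, ∀ α ∈ En s, b s α ≤ z s - ∑ t, P s α t * z t) →
          lam ≤ z s0)) ∧
      ((∃ y : {p : S × Act // p.2 ∈ En p.1} → ℝ,
          (∀ p, 0 ≤ y p) ∧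
          (∀ t : S, (∑ p : {p : S × Act // p.2 ∈ En p.1},
              y p * ((if p.1.1 = t then (1 : ℝ) else 0) - P p.1.1 p.1.2 t)) ≤
            (if s0 = t then (1 : ℝ) else 0)) ∧
          lam < ∑ p : {p : S × Act // p.2 ∈ En p.1}, y p * b p.1.1 p.1.2) ↔
        (∀ z : S → ℝ, (∀ s, ∀ α ∈ En s, b s α ≤ z s - ∑ t, P s α t * z t) →
          lam < z s0)) := by
  have hpos : ∀ σ : S → Act, (∀ s, σ s ∈ En s) → ∀ v : S → ℝ,
      (∀ s, ∑ t, P s (σ s) t * v t ≤ v s) → ∀ s, 0 ≤ v s := by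
    intro σ hσ
    refine nonneg_of_superharmonic (fun s t => P s (σ s) t) (fun s => b s (σ s) + c s (σ s))
      (fun s t => hP s _ (hσ s) t) (fun s => add_nonneg (hb s _ (hσ s)) (hc s _ (hσ s)))
      (fun s => ?_) (hexit σ hσ)
    rw [← add_assoc]; exact hsum s _ (hσ s)
  -- Weak duality: `y · b ≤ y A z ≤ δ_{s0} · z`, the second step using `z ≥ 0`.
  have weak : ∀ y : {p : S × Act // p.2 ∈ En p.1} → ℝ, (∀ p, 0 ≤ y p) →
      (∀ t : S, (∑ p : {p : S × Act // p.2 ∈ En p.1},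
          y p * ((if p.1.1 = t then (1 : ℝ) else 0) - P p.1.1 p.1.2 t)) ≤
        (if s0 = t then (1 : ℝ) else 0)) →
      ∀ z : S → ℝ, (∀ s, ∀ α ∈ En s, b s α ≤ z s - ∑ t, P s α t * z t) →
      ∑ p : {p : S × Act // p.2 ∈ En p.1}, y p * b p.1.1 p.1.2 ≤ z s0 := by
    intro y hy hyA z hz
    choose σ hσ using hEn
    have hz0 : ∀ s, 0 ≤ z s := hpos σ hσ z fun s => by
      linarith [hz s _ (hσ s), hb s _ (hσ s)]
    calc ∑ p : {p : S × Act // p.2 ∈ En p.1}, y p * b p.1.1 p.1.2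
        ≤ ∑ p : {p : S × Act // p.2 ∈ En p.1},
            y p * (z p.1.1 - ∑ t, P p.1.1 p.1.2 t * z t) :=
          Finset.sum_le_sum fun p _ => mul_le_mul_of_nonneg_left (hz _ _ p.2) (hy p)
      _ = ∑ p : {p : S × Act // p.2 ∈ En p.1}, ∑ t,
            y p * ((if p.1.1 = t then (1 : ℝ) else 0) - P p.1.1 p.1.2 t) * z t := by
          refine Finset.sum_congr rfl fun p _ => ?_
          simp only [mul_assoc, ← Finset.mul_sum, sub_mul, Finset.sum_sub_distrib, ite_mul,
            one_mul, zero_mul, Finset.sum_ite_eq, Finset.mem_univ, if_true]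
      _ = ∑ t, (∑ p : {p : S × Act // p.2 ∈ En p.1},
            y p * ((if p.1.1 = t then (1 : ℝ) else 0) - P p.1.1 p.1.2 t)) * z t := by
          rw [Finset.sum_comm]
          simp only [Finset.sum_mul]
      _ ≤ ∑ t, (if s0 = t then (1 : ℝ) else 0) * z t :=
          Finset.sum_le_sum fun t _ => mul_le_mul_of_nonneg_right (hyA t) (hz0 t)
      _ = z s0 := by simp
  -- Feasible solutions of both programs with a common value, taken from an optimal policy.
  have strong : ∃ y : {p : S × Act // p.2 ∈ En p.1} → ℝ, (∀ p, 0 ≤ y p) ∧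
      (∀ t : S, (∑ p : {p : S × Act // p.2 ∈ En p.1},
          y p * ((if p.1.1 = t then (1 : ℝ) else 0) - P p.1.1 p.1.2 t)) ≤
        (if s0 = t then (1 : ℝ) else 0)) ∧
      ∃ z : S → ℝ, (∀ s, ∀ α ∈ En s, b s α ≤ z s - ∑ t, P s α t * z t) ∧
      ∑ p : {p : S × Act // p.2 ∈ En p.1}, y p * b p.1.1 p.1.2 = z s0 := by
    have hinv : ∀ σ : {σ : S → Act // ∀ s, σ s ∈ En s}, ∃ N : Matrix S S ℝ,
        (∀ s t, 0 ≤ N s t) ∧ (1 - Matrix.of fun s t => P s (σ.1 s) t) * N = 1 ∧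
          N * (1 - Matrix.of fun s t => P s (σ.1 s) t) = 1 :=
      fun σ => exists_nonneg_inverse _ (hpos σ.1 σ.2)
    choose N hN0 hN1 hN2 using hinv
    let Z : {σ : S → Act // ∀ s, σ s ∈ En s} → S → ℝ := fun σ s => ∑ t, N σ s t * b t (σ.1 t)
    have hZ : ∀ σ s, Z σ s - ∑ t, P s (σ.1 s) t * Z σ t = b s (σ.1 s) := by
      intro σ s
      have h : (1 - Matrix.of fun s t => P s (σ.1 s) t).mulVec
          ((N σ).mulVec fun t => b t (σ.1 t)) = fun t => b t (σ.1 t) := by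
        rw [Matrix.mulVec_mulVec, hN1, Matrix.one_mulVec]
      have h' := congrFun h s
      rw [Matrix.sub_mulVec, Matrix.one_mulVec] at h'
      exact h'
    have : Nonempty {σ : S → Act // ∀ s, σ s ∈ En s} := by
      choose σ hσ using hEn
      exact ⟨⟨σ, hσ⟩⟩
    obtain ⟨σ, hmax⟩ := Finite.exists_max fun σ => ∑ s, Z σ s
    refine ⟨fun p => if p.1.2 = σ.1 p.1.1 then N σ s0 p.1.1 else 0, fun p => ?_, fun t => ?_,
      Z σ, ?_, ?_⟩
    · dsimp only
      split_ifs
      exacts [hN0 _ _ _, le_rfl]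
    · refine le_of_eq ?_
      rw [sum_policy En σ.1 σ.2 (N σ s0) fun s a => (if s = t then (1 : ℝ) else 0) - P s a t]
      have h := congrFun (congrFun (hN2 σ) s0) t
      simpa [Matrix.mul_apply, Matrix.one_apply] using h
    · -- A violated constraint would give a policy improvement.
      intro s α hα
      by_contra! hlt
      let τ : {σ : S → Act // ∀ s, σ s ∈ En s} := ⟨Function.update σ.1 s α, fun r => by
        by_cases h : r = s
        · subst h; simpa using hα
        · simpa [h] using σ.2 r⟩
      have hτs : τ.1 s = α := Function.update_self ..
      have himp : ∀ r, Z σ r - ∑ t, P r (τ.1 r) t * Z σ t ≤ b r (τ.1 r) := by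
        intro r
        by_cases h : r = s
        · subst h; rw [hτs]; exact hlt.le
        · have : τ.1 r = σ.1 r := Function.update_of_ne h ..
          rw [this]; exact (hZ σ r).le
      have hdiff : ∀ r, 0 ≤ Z τ r - Z σ r := by
        refine hpos τ.1 τ.2 (fun r => Z τ r - Z σ r) fun r => ?_
        simp only [mul_sub, Finset.sum_sub_distrib]
        linarith [himp r, hZ τ r]
      have hstrict : Z σ s < Z τ s := by
        have h1 := hZ τ s
        rw [hτs] at h1
        have h2 : ∑ t, P s α t * Z σ t ≤ ∑ t, P s α t * Z τ t :=
          Finset.sum_le_sum fun t _ =>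
            mul_le_mul_of_nonneg_left (sub_nonneg.1 (hdiff t)) (hP s α hα t)
        linarith
      exact (hmax τ).not_gt
        (Finset.sum_lt_sum (fun r _ => sub_nonneg.1 (hdiff r)) ⟨s, mem_univ s, hstrict⟩)
    · exact sum_policy En σ.1 σ.2 (N σ s0) b
  obtain ⟨y, hy0, hyA, z, hz, hyz⟩ := strong
  intro lam
  refine ⟨⟨?_, fun h => ⟨y, hy0, hyA, hyz ▸ h z hz⟩⟩, ⟨?_, fun h => ⟨y, hy0, hyA, hyz ▸ h z hz⟩⟩⟩
  · rintro ⟨y', h1, h2, h3⟩ z' hz'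
    exact h3.trans (weak y' h1 h2 z' hz')
  · rintro ⟨y', h1, h2, h3⟩ z' hz'
    exact h3.trans_le (weak y' h1 h2 z' hz')
end

section
/- In the MDP-LP setting with the exit condition, if y ∈ ℝ^M satisfies y ≥ 0 and yA ≤ δ_{s0}, then there exists y' ∈ ℝ^M with y' ≥ y (entrywise) and y'A = δ_{s0}. In particular, if additionally y·b > λ for some real λ, then there exists y' ≥ 0 with y'A = δ_{s0} and y'·b > λ. -/
/-!
Fix any scheduler `σ` and let `Q s t = P s (σ s) t`. The slack `r = δ_{s0} - yA` is nonnegative, and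
it suffices to find `z ≥ 0` with `z (1 - Q) = r`: adding `z s` to the coordinate `(s, σ s)` of `y`
gives `y'`. By the exit condition, `1 - Q` satisfies a minimum principle
(`nonneg_of_superharmonic`): `(1 - Q) x ≥ 0` forces `x ≥ 0`. Hence `1 - Q` is injective, so
invertible, and its inverse has nonnegative entries; `z = r (1 - Q)⁻¹` is the required vector
(`exists_nonneg_vecMul`). The second claim follows since `b ≥ 0` and `y' ≥ y`.
-/

open Finset Filter

/-- Minimum principle for a substochastic matrix `Q` from whose every state a row with sum less
than one is reachable. The set where a negative minimum is attained would be closed under `Q`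
and consist of rows with sum exactly one. -/
lemma nonneg_of_superharmonic_s5 {S : Type} [Fintype S]
    (Q : S → S → ℝ) (hQ : ∀ s t, 0 ≤ Q s t) (hQ1 : ∀ s, ∑ t, Q s t ≤ 1)
    (hexit : ∀ s : S, ∃ (k : ℕ) (path : ℕ → S), path 0 = s ∧
      (∀ i < k, 0 < Q (path i) (path (i + 1))) ∧ ∑ t, Q (path k) t < 1)
    (x : S → ℝ) (hx : ∀ s, ∑ t, Q s t * x t ≤ x s) (s : S) : 0 ≤ x s := by
  by_contra hneg
  have : Nonempty S := ⟨s⟩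
  obtain ⟨m, hm⟩ := Finite.exists_min x
  have hm0 : x m < 0 := lt_of_le_of_lt (hm s) (not_le.mp hneg)
  have hsplit : ∀ u, ∑ t, Q u t * (x t - x m) = ∑ t, Q u t * x t - (∑ t, Q u t) * x m := by
    intro u
    simp only [mul_sub, Finset.sum_sub_distrib, Finset.sum_mul]
  have hterm : ∀ u t, 0 ≤ Q u t * (x t - x m) := fun u t =>
    mul_nonneg (hQ u t) (sub_nonneg.mpr (hm t))
  obtain ⟨k, path, h0, hstep, hk⟩ := hexit m
  have hpath : ∀ i, i ≤ k → x (path i) = x m := by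
    intro i
    induction i with
    | zero => intro _; rw [h0]
    | succ i ih =>
      intro hi
      have hxi := ih (by omega)
      have hle : ∑ t, Q (path i) t * (x t - x m) ≤ 0 := by
        rw [hsplit]
        nlinarith [hx (path i), hQ1 (path i)]
      have hone := (Finset.single_le_sum (fun t _ => hterm (path i) t)
        (Finset.mem_univ (path (i + 1)))).trans hle
      have hpos := hstep i (by omega)
      nlinarith [hm (path (i + 1))]
  have hlast := Finset.sum_nonneg (fun t (_ : t ∈ Finset.univ) => hterm (path k) t)
  rw [hsplit] at hlast
  nlinarith [hx (path k), hpath k le_rfl]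

/-- If `A x ≥ 0` forces `x ≥ 0`, then `z A = r` has a nonnegative solution for each `r ≥ 0`. -/
lemma exists_nonneg_vecMul {S : Type} [Fintype S] [DecidableEq S] (A : Matrix S S ℝ)
    (hA : ∀ x : S → ℝ, (∀ s, 0 ≤ A.mulVec x s) → ∀ s, 0 ≤ x s)
    (r : S → ℝ) (hr : ∀ s, 0 ≤ r s) :
    ∃ z : S → ℝ, (∀ s, 0 ≤ z s) ∧ Matrix.vecMul z A = r := by
  have hinj : Function.Injective A.mulVec := by
    intro x x' h
    have h1 := hA (x - x') (by intro s; simp [Matrix.mulVec_sub, h])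
    have h2 := hA (x' - x) (by intro s; simp [Matrix.mulVec_sub, h])
    funext s
    have h1 := h1 s
    have h2 := h2 s
    simp only [Pi.sub_apply] at h1 h2
    linarith
  have hunit : IsUnit A := Matrix.mulVec_injective_iff_isUnit.mp hinj
  have hdet : IsUnit A.det := (Matrix.isUnit_iff_isUnit_det A).mp hunit
  have hinv : ∀ s t, 0 ≤ A⁻¹ s t := by
    intro s t
    -- The `t`-th column of the inverse is mapped by `A` to a basis vector.
    have h := hA (A⁻¹.mulVec (Pi.single t 1)) (by
      intro u
      rw [Matrix.mulVec_mulVec, Matrix.mul_nonsing_inv A hdet, Matrix.one_mulVec]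
      by_cases hu : u = t
      · subst hu; simp
      · simp [hu]) s
    simpa using h
  refine ⟨Matrix.vecMul r A⁻¹, ?_, ?_⟩
  · intro s
    exact Finset.sum_nonneg fun t _ => mul_nonneg (hr t) (hinv t s)
  · rw [Matrix.vecMul_vecMul, Matrix.nonsing_inv_mul A hdet, Matrix.vecMul_one]

/-- A sum over enabled pairs supported on the graph of a scheduler is a sum over states. -/
lemma sum_graph {S Act : Type} [Fintype S] [Fintype Act] [DecidableEq Act]
    (En : S → Finset Act) (σ : S → Act) (hσ : ∀ s, σ s ∈ En s) (g : S → Act → ℝ)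
    [Fintype {p : S × Act // p.2 ∈ En p.1}] :
    ∑ p : {p : S × Act // p.2 ∈ En p.1}, (if p.1.2 = σ p.1.1 then g p.1.1 p.1.2 else 0)
      = ∑ s, g s (σ s) := by
  rw [← Finset.sum_filter]
  refine Finset.sum_bij' (fun p _ => p.1.1) (fun s _ => ⟨(s, σ s), hσ s⟩) ?_ ?_ ?_ ?_ ?_
  · intro p _; simp
  · intro s _; simp
  · rintro ⟨⟨s, a⟩, h⟩ hp
    have : a = σ s := by simpa using hp
    subst this; rfl
  · intro s _; rfl
  · rintro ⟨⟨s, a⟩, h⟩ hp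
    have : a = σ s := by simpa using hp
    subst this; rfl

theorem stmt_5
    {S Act : Type} [Fintype S] [DecidableEq S] [Nonempty S]
    [Fintype Act] [DecidableEq Act]
    (s0 : S) (En : S → Finset Act) (hEn : ∀ s, (En s).Nonempty)
    (P : S → Act → S → ℝ) (b c : S → Act → ℝ)
    (hP : ∀ s, ∀ α ∈ En s, ∀ t, 0 ≤ P s α t)
    (hb : ∀ s, ∀ α ∈ En s, 0 ≤ b s α)
    (hc : ∀ s, ∀ α ∈ En s, 0 ≤ c s α)
    (hsum : ∀ s, ∀ α ∈ En s, (∑ t, P s α t) + b s α + c s α = 1)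
    (hexit : ∀ σ : S → Act, (∀ s, σ s ∈ En s) →
      ∀ s : S, ∃ (k : ℕ) (path : ℕ → S), path 0 = s ∧
        (∀ i < k, 0 < P (path i) (σ (path i)) (path (i + 1))) ∧
        0 < b (path k) (σ (path k)) + c (path k) (σ (path k))) :
    ∀ y : {p : S × Act // p.2 ∈ En p.1} → ℝ,
      (∀ p, 0 ≤ y p) →
      (∀ t : S, (∑ p : {p : S × Act // p.2 ∈ En p.1},
          y p * ((if p.1.1 = t then (1 : ℝ) else 0) - P p.1.1 p.1.2 t)) ≤
        (if s0 = t then (1 : ℝ) else 0)) →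
      (∃ y' : {p : S × Act // p.2 ∈ En p.1} → ℝ,
        (∀ p, y p ≤ y' p) ∧
        (∀ t : S, (∑ p : {p : S × Act // p.2 ∈ En p.1},
            y' p * ((if p.1.1 = t then (1 : ℝ) else 0) - P p.1.1 p.1.2 t)) =
          (if s0 = t then (1 : ℝ) else 0))) ∧
      (∀ lam : ℝ,
        lam < ∑ p : {p : S × Act // p.2 ∈ En p.1}, y p * b p.1.1 p.1.2 →
        ∃ y' : {p : S × Act // p.2 ∈ En p.1} → ℝ,
          (∀ p, 0 ≤ y' p) ∧
          (∀ t : S, (∑ p : {p : S × Act // p.2 ∈ En p.1},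
              y' p * ((if p.1.1 = t then (1 : ℝ) else 0) - P p.1.1 p.1.2 t)) =
            (if s0 = t then (1 : ℝ) else 0)) ∧
          lam < ∑ p : {p : S × Act // p.2 ∈ En p.1}, y' p * b p.1.1 p.1.2) := by
  intro y hy hyA
  have key : ∃ y' : {p : S × Act // p.2 ∈ En p.1} → ℝ,
      (∀ p, y p ≤ y' p) ∧
      (∀ t : S, (∑ p : {p : S × Act // p.2 ∈ En p.1},
          y' p * ((if p.1.1 = t then (1 : ℝ) else 0) - P p.1.1 p.1.2 t)) =
        (if s0 = t then (1 : ℝ) else 0)) := by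
    choose σ hσ using hEn
    let A : Matrix S S ℝ := fun s t => (if s = t then (1 : ℝ) else 0) - P s (σ s) t
    have hAx : ∀ (x : S → ℝ) s, A.mulVec x s = x s - ∑ t, P s (σ s) t * x t := by
      intro x s
      simp [A, Matrix.mulVec, dotProduct, sub_mul, Finset.sum_sub_distrib]
    obtain ⟨z, hz, hzA⟩ := exists_nonneg_vecMul A (by
      intro x hx
      refine nonneg_of_superharmonic_s5 (fun s t => P s (σ s) t)
        (fun s t => hP s _ (hσ s) t) ?_ ?_ x ?_
      · intro s
        have := hsum s _ (hσ s)
        have := hb s _ (hσ s)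
        have := hc s _ (hσ s)
        linarith
      · intro s
        obtain ⟨k, path, h0, hstep, hk⟩ := hexit σ hσ s
        refine ⟨k, path, h0, hstep, ?_⟩
        have := hsum (path k) _ (hσ (path k))
        linarith
      · intro s
        have := hx s
        rw [hAx] at this
        linarith) _ (fun t => sub_nonneg.mpr (hyA t))
    refine ⟨fun p => y p + if p.1.2 = σ p.1.1 then z p.1.1 else 0, ?_, ?_⟩
    · intro p
      have := hz p.1.1
      dsimp only
      split_ifs <;> linarith
    · intro t
      have h1 := sum_graph En σ hσ
        (fun s a => z s * ((if s = t then (1 : ℝ) else 0) - P s a t))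
      have h2 : ∑ s, z s * ((if s = t then (1 : ℝ) else 0) - P s (σ s) t) = _ := congrFun hzA t
      simp only [add_mul, ite_mul, zero_mul, Finset.sum_add_distrib]
      rw [h1, h2]
      ring
  refine ⟨key, ?_⟩
  intro lam hlam
  obtain ⟨y', hle, heq⟩ := key
  refine ⟨y', fun p => (hy p).trans (hle p), heq, hlam.trans_le ?_⟩
  exact Finset.sum_le_sum fun p _ => mul_le_mul_of_nonneg_right (hle p) (hb _ _ p.2)
end

section
/- In the MDP-LP setting with the exit condition, assume additionally that every state is reachable from s0, i.e., for every t ∈ S there are a finite sequence s0 = s_0, s_1, …, s_k = t in S and actions α_i ∈ Act(s_i) with P(s_i, α_i, s_{i+1}) > 0 for all i < k. Then for every λ ∈ [0,1] the set P^min(λ) = { z ∈ ℝ^S : A z ≤ b and z(s0) ≥ λ } is bounded. -/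
/-!
Every `z` with `A z ≤ b` satisfies `z ≤ 1` by a maximum principle: if the maximum `m` of `z` exceeds
`1`, then at a state attaining it no mass can leave through `b + c` and every successor attains it
too (`max_step`), so a path to an exit under a fixed scheduler gives a contradiction.

Given `z ≤ 1`, the inequality at an enabled pair `(s, α)` yields `P s α t * (1 - z t) ≤ 1 - z s`
(`deficit_step`). Since `1 - z s0 ≤ 1 - λ ≤ 1`, following a path from `s0` to `t` and dividing by
the positive transition probabilities bounds `1 - z t` by a constant depending only on `t`.
-/

open Finset Filter

/-- The equality case of the maximum principle at one state-action pair with transition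
probabilities `p` and exit probabilities `β`, `γ`: a maximum above `1` is attained only without
exit, and is passed on to every successor. -/
theorem max_step {S : Type} [Fintype S] {p z : S → ℝ} {β γ m : ℝ} {s : S}
    (hp : ∀ t, 0 ≤ p t) (hβ : 0 ≤ β) (hγ : 0 ≤ γ) (hsum : (∑ t, p t) + β + γ = 1)
    (hzm : ∀ t, z t ≤ m) (hm : 1 < m) (hs : z s = m) (hz : z s - ∑ t, p t * z t ≤ β) :
    β + γ = 0 ∧ ∀ t, 0 < p t → z t = m := by
  have hnn : ∀ t ∈ univ, 0 ≤ p t * (m - z t) := fun t _ =>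
    mul_nonneg (hp t) (sub_nonneg.2 (hzm t))
  have hS : ∑ t, p t * (m - z t) = (∑ t, p t) * m - ∑ t, p t * z t := by
    simp only [mul_sub, sum_sub_distrib, sum_mul]
  have hle : ∑ t, p t * (m - z t) ≤ (1 - m) * (β + γ) := by
    have h1 : ∑ t, p t = 1 - β - γ := by linarith
    rw [hS, h1]
    linarith
  have h0 := sum_nonneg hnn
  have hexit : β + γ = 0 := by nlinarith
  refine ⟨hexit, fun t ht => ?_⟩
  have h1 := single_le_sum hnn (mem_univ t)
  rw [hexit, mul_zero] at hle
  have h2 : m - z t ≤ 0 := nonpos_of_mul_nonpos_right (h1.trans hle) ht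
  linarith [hzm t]

/-- The deficit `1 - z` grows along a transition by at most the inverse of its probability. -/
theorem deficit_step {S : Type} [Fintype S] {p z : S → ℝ} {β γ : ℝ} {s : S}
    (hp : ∀ t, 0 ≤ p t) (hγ : 0 ≤ γ) (hsum : (∑ t, p t) + β + γ = 1)
    (hz1 : ∀ t, z t ≤ 1) (hz : z s - ∑ t, p t * z t ≤ β) (t : S) :
    p t * (1 - z t) ≤ 1 - z s := by
  have hnn : ∀ t ∈ univ, 0 ≤ p t * (1 - z t) := fun t _ =>
    mul_nonneg (hp t) (sub_nonneg.2 (hz1 t))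
  have hS : ∑ t, p t * (1 - z t) = (∑ t, p t) - ∑ t, p t * z t := by
    simp only [mul_sub, sum_sub_distrib, mul_one]
  have h1 := single_le_sum hnn (mem_univ t)
  simp only [hS] at h1
  linarith

theorem stmt_6
    {S Act : Type} [Fintype S] [DecidableEq S] [Nonempty S]
    [Fintype Act] [DecidableEq Act]
    (s0 : S) (En : S → Finset Act) (hEn : ∀ s, (En s).Nonempty)
    (P : S → Act → S → ℝ) (b c : S → Act → ℝ)
    (hP : ∀ s, ∀ α ∈ En s, ∀ t, 0 ≤ P s α t)
    (hb : ∀ s, ∀ α ∈ En s, 0 ≤ b s α)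
    (hc : ∀ s, ∀ α ∈ En s, 0 ≤ c s α)
    (hsum : ∀ s, ∀ α ∈ En s, (∑ t, P s α t) + b s α + c s α = 1)
    (hexit : ∀ σ : S → Act, (∀ s, σ s ∈ En s) →
      ∀ s : S, ∃ (k : ℕ) (path : ℕ → S), path 0 = s ∧
        (∀ i < k, 0 < P (path i) (σ (path i)) (path (i + 1))) ∧
        0 < b (path k) (σ (path k)) + c (path k) (σ (path k)))
    (hreach : ∀ t : S, ∃ (k : ℕ) (path : ℕ → S) (act : ℕ → Act),
      path 0 = s0 ∧ path k = t ∧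
      ∀ i < k, act i ∈ En (path i) ∧ 0 < P (path i) (act i) (path (i + 1)))
    (lam : ℝ) (hlam0 : 0 ≤ lam) (hlam1 : lam ≤ 1) :
    Bornology.IsBounded {z : S → ℝ |
      (∀ s, ∀ α ∈ En s, z s - ∑ t, P s α t * z t ≤ b s α) ∧ lam ≤ z s0} := by
  obtain ⟨σ, hσ⟩ : ∃ σ : S → Act, ∀ s, σ s ∈ En s := ⟨fun s => (hEn s).choose,
    fun s => (hEn s).choose_spec⟩
  have upper : ∀ z : S → ℝ,
      (∀ s, ∀ α ∈ En s, z s - ∑ t, P s α t * z t ≤ b s α) → ∀ s, z s ≤ 1 := by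
    intro z hz
    obtain ⟨x, hx⟩ := Finite.exists_max z
    by_contra! hcon
    obtain ⟨s, hs⟩ := hcon
    have hm : 1 < z x := hs.trans_le (hx s)
    have step : ∀ u, z u = z x → b u (σ u) + c u (σ u) = 0 ∧
        ∀ t, 0 < P u (σ u) t → z t = z x := fun u hu =>
      max_step (hP u _ (hσ u)) (hb u _ (hσ u)) (hc u _ (hσ u)) (hsum u _ (hσ u))
        hx hm hu (hz u _ (hσ u))
    obtain ⟨k, path, h0, hpath, hk⟩ := hexit σ hσ x
    have hall : ∀ i ≤ k, z (path i) = z x := by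
      intro i
      induction i with
      | zero => intro _; rw [h0]
      | succ i ih =>
        intro hi
        exact (step _ (ih (by omega))).2 _ (hpath i (by omega))
    exact hk.ne' (step _ (hall k le_rfl)).1
  have lower : ∀ t : S, ∃ C : ℝ, ∀ z : S → ℝ,
      (∀ s, ∀ α ∈ En s, z s - ∑ t, P s α t * z t ≤ b s α) → lam ≤ z s0 → 1 - z t ≤ C := by
    intro t
    obtain ⟨k, path, act, h0, hk, hpath⟩ := hreach t
    have hall : ∀ i ≤ k, ∃ C : ℝ, ∀ z : S → ℝ,
        (∀ s, ∀ α ∈ En s, z s - ∑ t, P s α t * z t ≤ b s α) → lam ≤ z s0 →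
          1 - z (path i) ≤ C := by
      intro i
      induction i with
      | zero =>
        intro _
        refine ⟨1, fun z _ hz0 => ?_⟩
        rw [h0]
        linarith
      | succ i ih =>
        intro hi
        obtain ⟨C, hC⟩ := ih (by omega)
        obtain ⟨hα, hpos⟩ := hpath i (by omega)
        refine ⟨C / P (path i) (act i) (path (i + 1)), fun z hz hz0 => ?_⟩
        rw [le_div_iff₀ hpos, mul_comm]
        exact (deficit_step (hP _ _ hα) (hc _ _ hα) (hsum _ _ hα) (upper z hz) (hz _ _ hα)
          _).trans (hC z hz hz0)
    simpa only [hk] using hall k le_rfl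
  choose C hC using lower
  refine (Metric.isBounded_Icc (fun t => 1 - C t) (fun _ : S => (1 : ℝ))).subset ?_
  rintro z ⟨hz, hz0⟩
  exact ⟨fun t => by linarith [hC t z hz hz0], upper z hz⟩
end

section
/- In the MDP-LP setting with the exit condition, for every λ ∈ [0,1] the set P^max(λ) = { y ∈ ℝ^M : y ≥ 0, yA ≤ δ_{s0} and y·b ≥ λ } is bounded. -/
/-!
The set is bounded because there is a potential `v : S → [0, 1]` that strictly decreases in
expectation under every enabled action: `d (s, α) = v s - ∑ t, P s α t * v t > 0`. Pairing the
constraint `yA ≤ δ_{s0}` with `v ≥ 0` gives `∑ p, y p * d p ≤ v s0`, so that `0 ≤ y p ≤ v s0 / d p`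
for every enabled pair `p`.

The potential comes from a rank function (`exists_rank`): by the exit condition, states can be ranked
so that every enabled action either exits with positive probability or moves with positive
probability to a state of smaller rank. For `η > 0` smaller than all positive transition and exit
probabilities, `v s = 1 - η ^ (r s + 1)` is then such a potential (`exists_potential`).
-/

open Finset Filter

/-- The `n`-th level of the attractor of the exit: the states from which, whatever enabled actions
are chosen, an exit happens within `n` steps with positive probability. Here `e s α` stands for the
exit probability. -/
def exitLevel {S Act : Type} (En : S → Finset Act) (P : S → Act → S → ℝ) (e : S → Act → ℝ) :
    ℕ → S → Prop
  | 0, _ => False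
  | n + 1, s => ∀ α ∈ En s, 0 < e s α ∨ ∃ t, exitLevel En P e n t ∧ 0 < P s α t

lemma exitLevel_succ {S Act : Type} {En : S → Finset Act} {P : S → Act → S → ℝ} {e : S → Act → ℝ}
    (n : ℕ) : ∀ s, exitLevel En P e n s → exitLevel En P e (n + 1) s := by
  induction n with
  | zero => intro s h; exact h.elim
  | succ n ih =>
    intro s h α hα
    rcases h α hα with h | ⟨t, ht, hp⟩
    · exact Or.inl h
    · exact Or.inr ⟨t, ih t ht, hp⟩

lemma exitLevel_mono {S Act : Type} {En : S → Finset Act} {P : S → Act → S → ℝ} {e : S → Act → ℝ}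
    {m n : ℕ} (hmn : m ≤ n) (s : S) (h : exitLevel En P e m s) : exitLevel En P e n s := by
  induction hmn with
  | refl => exact h
  | step _ ih => exact exitLevel_succ _ s ih

/-- The attractor of the exit is everything: outside of it a scheduler could choose actions that
neither exit nor enter the attractor, contradicting the exit condition. -/
lemma exists_exitLevel {S Act : Type} (En : S → Finset Act) (hEn : ∀ s, (En s).Nonempty)
    (P : S → Act → S → ℝ) (e : S → Act → ℝ)
    (hexit : ∀ σ : S → Act, (∀ s, σ s ∈ En s) →
      ∀ s : S, ∃ (k : ℕ) (path : ℕ → S), path 0 = s ∧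
        (∀ i < k, 0 < P (path i) (σ (path i)) (path (i + 1))) ∧
        0 < e (path k) (σ (path k))) (s : S) : ∃ n, exitLevel En P e n s := by
  have key : ∀ s, ∃ α ∈ En s, (¬ ∃ n, exitLevel En P e n s) →
      ¬ 0 < e s α ∧ ∀ t, 0 < P s α t → ¬ ∃ n, exitLevel En P e n t := by
    intro s
    by_cases hs : ∃ n, exitLevel En P e n s
    · obtain ⟨α, hα⟩ := hEn s
      exact ⟨α, hα, fun h => (h hs).elim⟩
    · by_contra! hcon
      have h1 : ∀ α ∈ En s, ∃ n, 0 < e s α ∨ ∃ t, exitLevel En P e n t ∧ 0 < P s α t := by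
        intro α hα
        obtain ⟨-, h⟩ := hcon α hα
        by_cases he : 0 < e s α
        · exact ⟨0, Or.inl he⟩
        · obtain ⟨t, hp, n, hn⟩ := h (not_lt.mp he)
          exact ⟨n, Or.inr ⟨t, hn, hp⟩⟩
      choose! N hN using h1
      -- Finitely many actions, so a single level serves all of them.
      refine hs ⟨(En s).sup N + 1, fun α hα => ?_⟩
      rcases hN α hα with h | ⟨t, ht, hp⟩
      · exact Or.inl h
      · exact Or.inr ⟨t, exitLevel_mono (Finset.le_sup hα) t ht, hp⟩
  choose σ hσ hbad using key
  by_contra hs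
  obtain ⟨k, path, h0, hstep, hk⟩ := hexit σ hσ s
  have hW : ∀ i ≤ k, ¬ ∃ n, exitLevel En P e n (path i) := by
    intro i
    induction i with
    | zero => intro _; rwa [h0]
    | succ i ih => intro hi; exact (hbad _ (ih (by omega))).2 _ (hstep i (by omega))
  exact (hbad _ (hW k le_rfl)).1 hk

lemma exists_rank {S Act : Type} (En : S → Finset Act) (P : S → Act → S → ℝ) (e : S → Act → ℝ)
    (h : ∀ s, ∃ n, exitLevel En P e n s) :
    ∃ r : S → ℕ, ∀ s, ∀ α ∈ En s, 0 < e s α ∨ ∃ t, r t < r s ∧ 0 < P s α t := by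
  classical
  refine ⟨fun s => Nat.find (h s), fun s α hα => ?_⟩
  have hs := Nat.find_spec (h s)
  generalize hn : Nat.find (h s) = n at hs
  cases n with
  | zero => exact hs.elim
  | succ n =>
    rcases hs α hα with he | ⟨t, ht, hp⟩
    · exact Or.inl he
    · refine Or.inr ⟨t, ?_, hp⟩
      have := Nat.find_min' (h t) ht
      simp only [hn]
      omega

/-- A rank function yields a nonnegative potential that strictly decreases in expectation under
every enabled action. -/
lemma exists_potential {S Act : Type} [Fintype S] [Fintype Act] (En : S → Finset Act)
    (P : S → Act → S → ℝ) (e : S → Act → ℝ)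
    (hP : ∀ s, ∀ α ∈ En s, ∀ t, 0 ≤ P s α t) (he : ∀ s, ∀ α ∈ En s, 0 ≤ e s α)
    (hsum : ∀ s, ∀ α ∈ En s, (∑ t, P s α t) + e s α = 1)
    (r : S → ℕ) (hr : ∀ s, ∀ α ∈ En s, 0 < e s α ∨ ∃ t, r t < r s ∧ 0 < P s α t) :
    ∃ v : S → ℝ, (∀ s, 0 ≤ v s) ∧ ∀ s, ∀ α ∈ En s, 0 < v s - ∑ t, P s α t * v t := by
  have hsmall : ∀ x : ℝ, 0 < x → ∀ᶠ η in nhdsWithin (0 : ℝ) (Set.Ioi 0), η < x := fun x hx =>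
    nhdsWithin_le_nhds (Iio_mem_nhds hx)
  have hev : ∀ᶠ η in nhdsWithin (0 : ℝ) (Set.Ioi 0), 0 < η ∧ η < 1 ∧
      (∀ s α, 0 < e s α → η < e s α) ∧ ∀ s α t, 0 < P s α t → η < P s α t := by
    refine Filter.Eventually.and self_mem_nhdsWithin ((hsmall 1 one_pos).and (Filter.Eventually.and ?_ ?_))
    · simp only [Filter.eventually_all]
      exact fun s α h => hsmall _ h
    · simp only [Filter.eventually_all]
      exact fun s α t h => hsmall _ h
  obtain ⟨η, h0, h1, hηe, hηP⟩ := hev.exists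
  refine ⟨fun s => 1 - η ^ (r s + 1), fun s => sub_nonneg.2 (pow_le_one₀ h0.le h1.le), ?_⟩
  intro s α hα
  have hexp : ∑ t, P s α t * (1 - η ^ (r t + 1)) =
      1 - e s α - ∑ t, P s α t * η ^ (r t + 1) := by
    simp only [mul_sub, mul_one, Finset.sum_sub_distrib]
    linarith [hsum s α hα]
  have hnn : ∀ t ∈ Finset.univ, 0 ≤ P s α t * η ^ (r t + 1) := fun t _ =>
    mul_nonneg (hP s α hα t) (by positivity)
  simp only [hexp]
  rcases hr s α hα with h | ⟨t, ht, hp⟩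
  · have a1 : η ^ (r s + 1) ≤ η := pow_le_of_le_one h0.le h1.le (by omega)
    linarith [Finset.sum_nonneg hnn, hηe s α h]
  · have a1 : η ^ (r s + 1) ≤ η ^ (r t + 1 + 1) := pow_le_pow_of_le_one h0.le h1.le (by omega)
    have a2 : η ^ (r t + 1 + 1) < P s α t * η ^ (r t + 1) := by
      rw [pow_succ, mul_comm]
      exact mul_lt_mul_of_pos_right (hηP s α t hp) (by positivity)
    linarith [Finset.single_le_sum hnn (Finset.mem_univ t), he s α hα]

theorem stmt_7
    {S Act : Type} [Fintype S] [DecidableEq S] [Nonempty S]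
    [Fintype Act] [DecidableEq Act]
    (s0 : S) (En : S → Finset Act) (hEn : ∀ s, (En s).Nonempty)
    (P : S → Act → S → ℝ) (b c : S → Act → ℝ)
    (hP : ∀ s, ∀ α ∈ En s, ∀ t, 0 ≤ P s α t)
    (hb : ∀ s, ∀ α ∈ En s, 0 ≤ b s α)
    (hc : ∀ s, ∀ α ∈ En s, 0 ≤ c s α)
    (hsum : ∀ s, ∀ α ∈ En s, (∑ t, P s α t) + b s α + c s α = 1)
    (hexit : ∀ σ : S → Act, (∀ s, σ s ∈ En s) →
      ∀ s : S, ∃ (k : ℕ) (path : ℕ → S), path 0 = s ∧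
        (∀ i < k, 0 < P (path i) (σ (path i)) (path (i + 1))) ∧
        0 < b (path k) (σ (path k)) + c (path k) (σ (path k)))
    (lam : ℝ) (hlam0 : 0 ≤ lam) (hlam1 : lam ≤ 1) :
    Bornology.IsBounded {y : {p : S × Act // p.2 ∈ En p.1} → ℝ |
      (∀ p, 0 ≤ y p) ∧
      (∀ t : S, (∑ p : {p : S × Act // p.2 ∈ En p.1},
          y p * ((if p.1.1 = t then (1 : ℝ) else 0) - P p.1.1 p.1.2 t)) ≤
        (if s0 = t then (1 : ℝ) else 0)) ∧
      lam ≤ ∑ p : {p : S × Act // p.2 ∈ En p.1}, y p * b p.1.1 p.1.2} := by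
  obtain ⟨r, hr⟩ := exists_rank En P (fun s α => b s α + c s α)
    (exists_exitLevel En hEn P (fun s α => b s α + c s α) hexit)
  obtain ⟨v, hv, hd⟩ := exists_potential En P (fun s α => b s α + c s α) hP
    (fun s α hα => add_nonneg (hb s α hα) (hc s α hα))
    (fun s α hα => by simpa only [add_assoc] using hsum s α hα) r hr
  let d : {p : S × Act // p.2 ∈ En p.1} → ℝ := fun p => v p.1.1 - ∑ t, P p.1.1 p.1.2 t * v t
  have hd' : ∀ p, 0 < d p := fun p => hd _ _ p.2
  refine (Metric.isBounded_Icc (0 : {p : S × Act // p.2 ∈ En p.1} → ℝ)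
    (fun p => v s0 / d p)).subset ?_
  rintro y ⟨hy, hA, -⟩
  refine ⟨hy, fun p => ?_⟩
  rw [le_div_iff₀ (hd' p)]
  calc y p * d p ≤ ∑ q, y q * d q :=
        Finset.single_le_sum (f := fun q => y q * d q)
          (fun q _ => mul_nonneg (hy q) (hd' q).le) (Finset.mem_univ p)
    _ = ∑ t, (∑ q : {p : S × Act // p.2 ∈ En p.1},
          y q * ((if q.1.1 = t then (1 : ℝ) else 0) - P q.1.1 q.1.2 t)) * v t := by
        simp only [Finset.sum_mul]
        rw [Finset.sum_comm]
        refine Finset.sum_congr rfl fun q _ => ?_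
        simp only [d, mul_assoc, ← Finset.mul_sum, sub_mul, Finset.sum_sub_distrib, ite_mul,
          one_mul, zero_mul, Finset.sum_ite_eq, Finset.mem_univ, if_true]
    _ ≤ ∑ t, (if s0 = t then (1 : ℝ) else 0) * v t :=
        Finset.sum_le_sum fun t _ => mul_le_mul_of_nonneg_right (hA t) (hv t)
    _ = v s0 := by simp
end

section
/- In the MDP-LP setting with the exit condition, let R ⊆ S with s0 ∈ R and let λ be a real number. Then the following are equivalent: (1) there exists z' : R → ℝ with z'(s0) ≥ λ such that z'(s) ≤ ∑_{t∈R} P(s,α,t)·z'(t) + b(s,α) for all s ∈ R and α ∈ Act(s); (2) there exists z ∈ ℝ^S with z ≥ 0, A z ≤ b, z(s0) ≥ λ, and z(s) = 0 for all s ∈ S \ R. -/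
/-!
The subsystem inequalities are preserved by the entrywise positive part of `z'`: the right-hand
side is monotone in `z'` because `P ≥ 0`, and at a nonnegative vector it is nonnegative because
also `b ≥ 0`; so it bounds both `z' s` and `0`. Hence the positive part of `z'`, extended by zero
outside `R`, is a nonnegative solution of `A z ≤ b`, the rows outside `R` being trivial. Conversely,
a solution on `S` that vanishes outside `R` restricts to a solution on `R`.
-/

open Finset Filter

/-- A sum over `S` weighted by a function vanishing outside `R` is a sum over the subtype of `R`. -/
theorem sum_mul_eq_sum_subtype {S : Type} [Fintype S] (R : Finset S) (p z : S → ℝ)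
    (hz : ∀ s, s ∉ R → z s = 0) :
    ∑ t, p t * z t = ∑ t : {s : S // s ∈ R}, p t.1 * z t.1 := by
  rw [Finset.sum_coe_sort R (fun t => p t * z t)]
  refine (Finset.sum_subset (Finset.subset_univ R) fun t _ ht => ?_).symm
  rw [hz t ht, mul_zero]

theorem stmt_8
    {S Act : Type} [Fintype S] [DecidableEq S] [Nonempty S]
    [Fintype Act] [DecidableEq Act]
    (s0 : S) (En : S → Finset Act) (hEn : ∀ s, (En s).Nonempty)
    (P : S → Act → S → ℝ) (b c : S → Act → ℝ)
    (hP : ∀ s, ∀ α ∈ En s, ∀ t, 0 ≤ P s α t)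
    (hb : ∀ s, ∀ α ∈ En s, 0 ≤ b s α)
    (hc : ∀ s, ∀ α ∈ En s, 0 ≤ c s α)
    (hsum : ∀ s, ∀ α ∈ En s, (∑ t, P s α t) + b s α + c s α = 1)
    (hexit : ∀ σ : S → Act, (∀ s, σ s ∈ En s) →
      ∀ s : S, ∃ (k : ℕ) (path : ℕ → S), path 0 = s ∧
        (∀ i < k, 0 < P (path i) (σ (path i)) (path (i + 1))) ∧
        0 < b (path k) (σ (path k)) + c (path k) (σ (path k)))
    (R : Finset S) (hs0 : s0 ∈ R) (lam : ℝ) :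
    ((∃ z' : {s : S // s ∈ R} → ℝ,
        lam ≤ z' ⟨s0, hs0⟩ ∧
        (∀ s : {s : S // s ∈ R}, ∀ α ∈ En s.1,
          z' s ≤ (∑ t : {s : S // s ∈ R}, P s.1 α t.1 * z' t) + b s.1 α)) ↔
      (∃ z : S → ℝ,
        (∀ s, 0 ≤ z s) ∧
        (∀ s, ∀ α ∈ En s, z s - ∑ t, P s α t * z t ≤ b s α) ∧
        lam ≤ z s0 ∧
        (∀ s, s ∉ R → z s = 0))) := by
  constructor
  · rintro ⟨z', hlam, hz'⟩
    let z : S → ℝ := fun s => if h : s ∈ R then max (z' ⟨s, h⟩) 0 else 0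
    have hzR : ∀ s : {s : S // s ∈ R}, z s.1 = max (z' s) 0 := fun s => dif_pos s.2
    have hz0 : ∀ s, s ∉ R → z s = 0 := fun s hs => dif_neg hs
    have hnn : ∀ s, 0 ≤ z s := by
      intro s
      by_cases hs : s ∈ R
      · rw [hzR ⟨s, hs⟩]
        exact le_max_right _ _
      · rw [hz0 s hs]
    refine ⟨z, hnn, fun s α hα => ?_, ?_, hz0⟩
    · have hpos : 0 ≤ ∑ t, P s α t * z t :=
        Finset.sum_nonneg fun t _ => mul_nonneg (hP s α hα t) (hnn t)
      have hbs := hb s α hα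
      by_cases hs : s ∈ R
      · have hmono : ∑ t : {s : S // s ∈ R}, P s α t.1 * z' t ≤ ∑ t, P s α t * z t := by
          rw [sum_mul_eq_sum_subtype R (P s α) z hz0]
          refine Finset.sum_le_sum fun t _ => mul_le_mul_of_nonneg_left ?_ (hP s α hα t.1)
          rw [hzR t]
          exact le_max_left _ _
        have hrow := hz' ⟨s, hs⟩ α hα
        have hmax : z s ≤ ∑ t, P s α t * z t + b s α := by
          rw [hzR ⟨s, hs⟩]
          exact max_le (by linarith) (by linarith)
        linarith
      · rw [hz0 s hs]
        linarith
    · rw [hzR ⟨s0, hs0⟩]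
      exact hlam.trans (le_max_left _ _)
  · rintro ⟨z, -, hA, hlam, hz0⟩
    refine ⟨fun s => z s.1, hlam, fun s α hα => ?_⟩
    have hrow := hA s.1 α hα
    rw [sum_mul_eq_sum_subtype R (P s.1 α) z hz0] at hrow
    linarith
end

section
/- In the MDP-LP setting with the exit condition, let R ⊆ M be a set of enabled state-action pairs, let S_R = { s ∈ S : (s,α) ∈ R for some α } and assume s0 ∈ S_R, and let λ be a real number. Then the following are equivalent: (1) every z : S_R → ℝ satisfying z(s) ≥ 0 for all s ∈ S_R and z(s) ≥ ∑_{t∈S_R} P(s,α,t)·z(t) + b(s,α) for all (s,α) ∈ R satisfies z(s0) ≥ λ; (2) there exists y ∈ ℝ^M with y ≥ 0, yA ≤ δ_{s0}, y·b ≥ λ, and y(s,α) = 0 for all (s,α) ∈ M \ R. -/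
/-!
The equivalence is linear programming duality. The vectors `z` in (1) are the feasible points of the
linear program "minimise `z s0` subject to `z ≥ 0` and `A z ≥ b` on the rows in `R`", with columns
restricted to `S_R`, and the vectors `y` in (2), restricted to `R`, are the feasible points of its
dual. The columns outside `S_R` give no further constraint on `y`: a row in `R` has its diagonal
entry in a column of `S_R`, so in the other columns `yA ≤ 0` holds automatically.

Weak duality (2) → (1) is the computation `λ ≤ y·b ≤ y A z ≤ z s0`. For (1) → (2), the duality theorem
`exists_dual_of_primal_bound` is obtained by homogenising the system and applying the finite-dimensional
Farkas lemma `farkas`. The objective `z s0` is nonnegative on the whole nonnegative orthant, so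
homogenisation adds no condition at infinity and the dual bound is attained.
-/

open Finset Filter

/-- **Farkas' lemma**, in the algebraic form: if a linear functional `C` is nonnegative wherever
finitely many linear functionals `A i` are, it is a nonnegative combination of them. The induction
drops one functional `A a`; if it cannot be dropped, a witness `x` with `A a x < 0` allows projecting
along `x` onto the kernel of `A a`. -/
lemma farkas {V ι : Type*} [AddCommGroup V] [Module ℝ V] [DecidableEq ι] (s : Finset ι) :
    ∀ (A : ι → V →ₗ[ℝ] ℝ) (C : V →ₗ[ℝ] ℝ),
      (∀ x, (∀ i ∈ s, 0 ≤ A i x) → 0 ≤ C x) →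
      ∃ y : ι → ℝ, (∀ i, 0 ≤ y i) ∧ ∀ x, C x = ∑ i ∈ s, y i * A i x := by
  induction s using Finset.induction_on with
  | empty =>
    intro A C h
    refine ⟨0, fun _ => le_rfl, fun x => ?_⟩
    have h1 := h x (by simp)
    have h2 := h (-x) (by simp)
    rw [map_neg] at h2
    simp only [Finset.sum_empty]
    linarith
  | insert a s ha ih =>
    intro A C h
    by_cases hC : ∀ x, (∀ i ∈ s, 0 ≤ A i x) → 0 ≤ C x
    · obtain ⟨y, hy, hyC⟩ := ih A C hC
      refine ⟨fun i => if i = a then 0 else y i, fun i => ?_, fun x => ?_⟩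
      · dsimp only
        split_ifs
        exacts [le_rfl, hy i]
      · rw [Finset.sum_insert ha, hyC x]
        simp only [if_true, zero_mul, zero_add]
        refine Finset.sum_congr rfl fun i hi => ?_
        rw [if_neg (ne_of_mem_of_not_mem hi ha)]
    · push Not at hC
      obtain ⟨x, hx, hCx⟩ := hC
      have hax : A a x < 0 := by
        by_contra! hax
        refine absurd (h x fun i hi => ?_) (not_le.2 hCx)
        rcases Finset.mem_insert.1 hi with rfl | hi
        exacts [hax, hx i hi]
      -- `v - (A a v / A a x) • x` is the projection of `v` to the kernel of `A a` along `x`.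
      obtain ⟨y, hy, hyC⟩ := ih (fun i => A i - (A i x / A a x) • A a) (C - (C x / A a x) • A a) (by
        intro v hv
        have := h (v - (A a v / A a x) • x) (by
          intro i hi
          rcases Finset.mem_insert.1 hi with rfl | hi
          · simp [hax.ne]
          · have := hv i hi
            simp only [LinearMap.sub_apply, LinearMap.smul_apply, smul_eq_mul, map_sub,
              map_smul] at this ⊢
            convert this using 2
            ring)
        simp only [LinearMap.sub_apply, LinearMap.smul_apply, smul_eq_mul, map_sub,
          map_smul] at this ⊢
        convert this using 2
        ring)
      have hsum : 0 ≤ ∑ i ∈ s, y i * A i x :=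
        Finset.sum_nonneg fun i hi => mul_nonneg (hy i) (hx i hi)
      refine ⟨fun i => if i = a then (C x - ∑ i ∈ s, y i * A i x) / A a x else y i,
        fun i => ?_, fun v => ?_⟩
      · dsimp only
        split_ifs
        · exact div_nonneg_of_nonpos (by linarith) hax.le
        · exact hy i
      · have h1 := hyC v
        simp only [LinearMap.sub_apply, LinearMap.smul_apply, smul_eq_mul] at h1
        have h2 : ∑ i ∈ s, y i * (A i v - A i x / A a x * A a v) =
            ∑ i ∈ s, y i * A i v - (∑ i ∈ s, y i * A i x) / A a x * A a v := by
          rw [Finset.sum_div, Finset.sum_mul, ← Finset.sum_sub_distrib]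
          exact Finset.sum_congr rfl fun i _ => by ring
        have h3 : ∑ i ∈ s, (if i = a then (C x - ∑ i ∈ s, y i * A i x) / A a x else y i) * A i v =
            ∑ i ∈ s, y i * A i v :=
          Finset.sum_congr rfl fun i hi => by rw [if_neg (ne_of_mem_of_not_mem hi ha)]
        rw [Finset.sum_insert ha, h3]
        simp only [if_true, sub_div]
        linarith

/-- Strong duality for a linear program with nonnegative cost vector `d`: a lower bound `lam` for
`d·x` on `{x ≥ 0, A x ≥ b}` is certified by a dual feasible `y`. -/
lemma exists_dual_of_primal_bound {m n : Type*} [Fintype m] [Fintype n] [DecidableEq m]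
    [DecidableEq n] (A : m → n → ℝ) (b : m → ℝ) (d : n → ℝ) (lam : ℝ) (hd : ∀ j, 0 ≤ d j)
    (h : ∀ x : n → ℝ, (∀ j, 0 ≤ x j) → (∀ i, b i ≤ ∑ j, A i j * x j) → lam ≤ ∑ j, d j * x j) :
    ∃ y : m → ℝ, (∀ i, 0 ≤ y i) ∧ (∀ j, ∑ i, y i * A i j ≤ d j) ∧ lam ≤ ∑ i, y i * b i := by
  let pr : n → ((n → ℝ) × ℝ) →ₗ[ℝ] ℝ := fun j => LinearMap.proj j ∘ₗ LinearMap.fst ℝ _ _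
  let la : ((n → ℝ) × ℝ) →ₗ[ℝ] ℝ := LinearMap.snd ℝ _ _
  -- Homogenised system on pairs `(x, τ)`: `A x ≥ τ b`, `x ≥ 0`, `τ ≥ 0` implies `d·x ≥ τ lam`.
  let F : m ⊕ n ⊕ Unit → ((n → ℝ) × ℝ) →ₗ[ℝ] ℝ :=
    Sum.elim (fun i => ∑ j, A i j • pr j - b i • la) (Sum.elim pr fun _ => la)
  obtain ⟨y, hy, hyC⟩ := farkas Finset.univ F (∑ j, d j • pr j - lam • la) (by
    rintro ⟨x, τ⟩ hF
    have h1 : ∀ i, τ * b i ≤ ∑ j, A i j * x j := fun i => by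
      have := hF (Sum.inl i) (Finset.mem_univ _)
      simp [F, pr, la] at this
      linarith
    have h2 : ∀ j, 0 ≤ x j := fun j => hF (Sum.inr (Sum.inl j)) (Finset.mem_univ _)
    have h3 : 0 ≤ τ := hF (Sum.inr (Sum.inr ())) (Finset.mem_univ _)
    suffices τ * lam ≤ ∑ j, d j * x j by
      simp [pr, la]
      linarith
    rcases h3.eq_or_lt with rfl | h3
    · rw [zero_mul]
      exact Finset.sum_nonneg fun j _ => mul_nonneg (hd j) (h2 j)
    · have hs : ∀ f : n → ℝ, ∑ j, f j * (x j / τ) = (∑ j, f j * x j) / τ := fun f => by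
        rw [Finset.sum_div]
        exact Finset.sum_congr rfl fun j _ => by ring
      have := h (fun j => x j / τ) (fun j => div_nonneg (h2 j) h3.le) (fun i => by
        rw [hs, le_div_iff₀ h3]
        linarith [h1 i])
      rw [hs, le_div_iff₀ h3] at this
      linarith)
  refine ⟨fun i => y (Sum.inl i), fun i => hy _, fun j => ?_, ?_⟩
  · have h1 := hyC (Pi.single j 1, 0)
    simp [F, pr, la, Pi.single_apply] at h1
    linarith [hy (Sum.inr (Sum.inl j))]
  · have h1 := hyC (0, 1)
    simp [F, pr, la] at h1
    linarith [hy (Sum.inr (Sum.inr ()))]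

lemma sum_subtype_eq_sum_of_support {ι : Type*} [Fintype ι] [DecidableEq ι] (q : ι → Prop)
    [DecidablePred q] (R : Finset ι) (hR : ∀ p ∈ R, q p) (f : {p // q p} → ℝ) (g : ι → ℝ)
    (hfg : ∀ p, p.1 ∈ R → f p = g p.1) (hf : ∀ p, p.1 ∉ R → f p = 0) :
    ∑ p, f p = ∑ p ∈ R, g p := by
  symm
  refine Finset.sum_bij_ne_zero (fun p hp _ => ⟨p, hR p hp⟩) (fun _ _ _ => Finset.mem_univ _)
    (fun _ _ _ _ _ _ h => congrArg Subtype.val h) (fun p _ hp => ?_)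
    (fun p hp _ => (hfg ⟨p, hR p hp⟩ hp).symm)
  have hpR : p.1 ∈ R := by_contra fun h => hp (hf p h)
  exact ⟨p.1, hpR, hfg p hpR ▸ hp, rfl⟩

theorem stmt_9
    {S Act : Type} [Fintype S] [DecidableEq S] [Nonempty S]
    [Fintype Act] [DecidableEq Act]
    (s0 : S) (En : S → Finset Act) (hEn : ∀ s, (En s).Nonempty)
    (P : S → Act → S → ℝ) (b c : S → Act → ℝ)
    (hP : ∀ s, ∀ α ∈ En s, ∀ t, 0 ≤ P s α t)
    (hb : ∀ s, ∀ α ∈ En s, 0 ≤ b s α)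
    (hc : ∀ s, ∀ α ∈ En s, 0 ≤ c s α)
    (hsum : ∀ s, ∀ α ∈ En s, (∑ t, P s α t) + b s α + c s α = 1)
    (hexit : ∀ σ : S → Act, (∀ s, σ s ∈ En s) →
      ∀ s : S, ∃ (k : ℕ) (path : ℕ → S), path 0 = s ∧
        (∀ i < k, 0 < P (path i) (σ (path i)) (path (i + 1))) ∧
        0 < b (path k) (σ (path k)) + c (path k) (σ (path k)))
    (R : Finset (S × Act)) (hR : ∀ p ∈ R, p.2 ∈ En p.1)
    (hs0 : ∃ α : Act, (s0, α) ∈ R) (lam : ℝ) :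
    ((∀ z : {s : S // ∃ α : Act, (s, α) ∈ R} → ℝ,
        (∀ s, 0 ≤ z s) →
        (∀ (s : {s : S // ∃ α : Act, (s, α) ∈ R}) (α : Act), (s.1, α) ∈ R →
          (∑ t : {s : S // ∃ α : Act, (s, α) ∈ R}, P s.1 α t.1 * z t) + b s.1 α ≤ z s) →
        lam ≤ z ⟨s0, hs0⟩) ↔
      (∃ y : {p : S × Act // p.2 ∈ En p.1} → ℝ,
        (∀ p, 0 ≤ y p) ∧
        (∀ t : S, (∑ p : {p : S × Act // p.2 ∈ En p.1},
            y p * ((if p.1.1 = t then (1 : ℝ) else 0) - P p.1.1 p.1.2 t)) ≤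
          (if s0 = t then (1 : ℝ) else 0)) ∧
        lam ≤ (∑ p : {p : S × Act // p.2 ∈ En p.1}, y p * b p.1.1 p.1.2) ∧
        (∀ p : {p : S × Act // p.2 ∈ En p.1}, p.1 ∉ R → y p = 0))) := by
  classical
  -- For `s ∈ S_R`, the row of `A` at `(s, α)`, restricted to the columns in `S_R`, acts on `z`
  -- like `z s - ∑ t, P s α t * z t`.
  have hrow : ∀ (z : {s : S // ∃ α : Act, (s, α) ∈ R} → ℝ)
      (s : {s : S // ∃ α : Act, (s, α) ∈ R}) (α : Act),
      ∑ t : {s : S // ∃ α : Act, (s, α) ∈ R},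
        ((if s.1 = t.1 then (1 : ℝ) else 0) - P s.1 α t.1) * z t =
      z s - ∑ t : {s : S // ∃ α : Act, (s, α) ∈ R}, P s.1 α t.1 * z t := by
    intro z s α
    simp [sub_mul, Finset.sum_sub_distrib, ← Subtype.ext_iff]
  have hdelta : ∀ z : {s : S // ∃ α : Act, (s, α) ∈ R} → ℝ,
      ∑ t : {s : S // ∃ α : Act, (s, α) ∈ R}, (if s0 = t.1 then (1 : ℝ) else 0) * z t =
        z ⟨s0, hs0⟩ := by
    intro z
    rw [Finset.sum_eq_single ⟨s0, hs0⟩]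
    · simp
    · intro t _ ht
      rw [if_neg (fun h => ht (Subtype.ext h.symm)), zero_mul]
    · simp
  constructor
  · intro h
    obtain ⟨y, hy, hyA, hyb⟩ := exists_dual_of_primal_bound
      (m := {p // p ∈ R}) (n := {s : S // ∃ α : Act, (s, α) ∈ R})
      (fun p t => (if p.1.1 = t.1 then (1 : ℝ) else 0) - P p.1.1 p.1.2 t.1)
      (fun p => b p.1.1 p.1.2) (fun t => if s0 = t.1 then 1 else 0) lam
      (fun t => by positivity) (by
        intro z hz hzA
        rw [hdelta]
        refine h z hz fun s α hsα => ?_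
        have h1 := hzA ⟨(s.1, α), hsα⟩
        have h2 := hrow z s α
        dsimp only at h1
        linarith)
    have hY : ∀ g : S × Act → ℝ,
        ∑ p : {p : S × Act // p.2 ∈ En p.1},
          (if hp : p.1 ∈ R then y ⟨p.1, hp⟩ else 0) * g p.1 = ∑ p, y p * g p.1 := by
      intro g
      rw [sum_subtype_eq_sum_of_support (fun p : S × Act => p.2 ∈ En p.1) R hR _
        (fun p => (if hp : p ∈ R then y ⟨p, hp⟩ else 0) * g p) (fun _ _ => rfl)
        (fun p hp => by simp [hp]), ← Finset.sum_coe_sort]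
      exact Finset.sum_congr rfl fun p _ => by simp
    refine ⟨fun p => if hp : p.1 ∈ R then y ⟨p.1, hp⟩ else 0, fun p => ?_, fun t => ?_, ?_,
      fun p hp => by simp [hp]⟩
    · dsimp only
      split_ifs
      exacts [hy _, le_rfl]
    · rw [hY fun p => (if p.1 = t then (1 : ℝ) else 0) - P p.1 p.2 t]
      by_cases ht : ∃ α : Act, (t, α) ∈ R
      · exact hyA ⟨t, ht⟩
      · refine le_trans (Finset.sum_nonpos fun p _ => ?_) (by positivity)
        rw [if_neg (fun hpt => ht ⟨p.1.2, by rw [← hpt]; exact p.2⟩)]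
        exact mul_nonpos_of_nonneg_of_nonpos (hy p)
          (by linarith [hP p.1.1 p.1.2 (hR p.1 p.2) t])
    · rw [hY fun p => b p.1 p.2]
      exact hyb
  · rintro ⟨y, hy, hyA, hyb, hy0⟩ z hz hzA
    calc lam ≤ ∑ p : {p : S × Act // p.2 ∈ En p.1}, y p * b p.1.1 p.1.2 := hyb
      _ ≤ ∑ p : {p : S × Act // p.2 ∈ En p.1}, y p *
            ∑ t : {s : S // ∃ α : Act, (s, α) ∈ R},
              ((if p.1.1 = t.1 then (1 : ℝ) else 0) - P p.1.1 p.1.2 t.1) * z t := by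
        refine Finset.sum_le_sum fun p _ => ?_
        by_cases hp : p.1 ∈ R
        · refine mul_le_mul_of_nonneg_left ?_ (hy p)
          have h1 := hzA ⟨p.1.1, p.1.2, hp⟩ p.1.2 hp
          have h2 := hrow z ⟨p.1.1, p.1.2, hp⟩ p.1.2
          dsimp only at h1 h2
          linarith
        · simp [hy0 p hp]
      _ = ∑ t : {s : S // ∃ α : Act, (s, α) ∈ R}, (∑ p : {p : S × Act // p.2 ∈ En p.1},
            y p * ((if p.1.1 = t.1 then (1 : ℝ) else 0) - P p.1.1 p.1.2 t.1)) * z t := by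
        simp only [Finset.mul_sum, Finset.sum_mul]
        rw [Finset.sum_comm]
        exact Finset.sum_congr rfl fun _ _ => Finset.sum_congr rfl fun _ _ => by ring
      _ ≤ ∑ t : {s : S // ∃ α : Act, (s, α) ∈ R}, (if s0 = t.1 then (1 : ℝ) else 0) * z t :=
        Finset.sum_le_sum fun t _ => mul_le_mul_of_nonneg_right (hyA t.1) (hz t)
      _ = z ⟨s0, hs0⟩ := hdelta z
end

section
/- In the MDP-LP setting with the exit condition, let R ⊆ S with s0 ∈ R. Let z* ∈ ℝ^S be the pointwise greatest element of {z ∈ ℝ^S : A z ≤ b} and let w* : R → ℝ be the pointwise greatest element of the set of z' : R → ℝ satisfying z'(s) ≤ ∑_{t∈R} P(s,α,t)·z'(t) + b(s,α) for all s ∈ R and α ∈ Act(s) (both greatest elements exist). Then w*(s) ≤ z*(s) for all s ∈ R. Dually, if v* is the pointwise least element of {z ∈ ℝ^S : A z ≥ b} and u* the pointwise least element of the z' : R → ℝ satisfying z'(s) ≥ ∑_{t∈R} P(s,α,t)·z'(t) + b(s,α) for all s ∈ R, α ∈ Act(s), then u*(s) ≤ v*(s) for all s ∈ R. -/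
/-!
The value vectors are fixed points of the monotone Bellman operators
`F z s = min_α (∑ t, P s α t * z t + b s α)` and its `max` analogue, which map `[0,1]^S` to itself;
Knaster–Tarski yields a fixed point `z` (`exists_fixedPoint`).

Extremality comes from a maximum principle (`le_zero_of_le_sum`): under the exit condition, a vector
`d` with `d ≤ P_σ d` for some scheduler `σ` is nonpositive, because a positive maximum would
propagate along the exit path of `σ` to a state with no exit probability. If `w ≤ F w` and `σ`
attains the minimum in `F z = z`, then `d = w - z` satisfies `d ≤ P_σ d`, so `w ≤ z`
(`exists_greatest`); dually for the least element (`exists_least`). The subsystem on `R` inherits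
the maximum principle by extending the positive part of `d` by zero outside `R`.

For the comparison, the greatest vector of the subsystem is nonnegative (zero is feasible), so its
extension by zero is feasible for the full system; dually the least vector of the full system is
nonnegative, so its restriction to `R` is feasible for the subsystem.
-/
open Finset Filter

/-- Knaster–Tarski on the cube `[0,1]^T`. -/
theorem exists_fixedPoint {T : Type} (F : (T → ℝ) → T → ℝ)
    (hmono : ∀ x y, x ≤ y → F x ≤ F y) (h0 : 0 ≤ F 0) (h1 : F 1 ≤ 1) :
    ∃ z, 0 ≤ z ∧ F z = z := by
  have hmem (x : T → unitInterval) (s : T) :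
      F (fun t => (x t : ℝ)) s ∈ Set.Icc (0 : ℝ) 1 :=
    ⟨(h0 s).trans (hmono 0 _ (fun t => (x t).2.1) s),
      (hmono _ 1 (fun t => (x t).2.2) s).trans (h1 s)⟩
  let G : (T → unitInterval) →o (T → unitInterval) :=
    { toFun := fun x s => ⟨F (fun t => (x t : ℝ)) s, hmem x s⟩
      monotone' := fun x y hxy s => hmono _ _ (fun t => hxy t) s }
  refine ⟨fun t => (G.lfp t : ℝ), fun t => (G.lfp t).2.1, ?_⟩
  funext s
  exact congrArg Subtype.val (congrFun G.map_lfp s)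

/-- The conclusion of the maximum principle for a family `Q` of transition weights: for every
scheduler `σ`, every vector `d` with `d ≤ Q_σ d` is nonpositive. -/
def MaxPrinciple {T Act : Type} [Fintype T] (En : T → Finset Act) (Q : T → Act → T → ℝ) : Prop :=
  ∀ σ : T → Act, (∀ s, σ s ∈ En s) → ∀ d : T → ℝ,
    (∀ s, d s ≤ ∑ t, Q s (σ s) t * d t) → ∀ s, d s ≤ 0

theorem le_zero_of_le_sum {S Act : Type} [Fintype S]
    (En : S → Finset Act) (P : S → Act → S → ℝ) (b c : S → Act → ℝ)
    (hP : ∀ s, ∀ α ∈ En s, ∀ t, 0 ≤ P s α t)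
    (hb : ∀ s, ∀ α ∈ En s, 0 ≤ b s α)
    (hc : ∀ s, ∀ α ∈ En s, 0 ≤ c s α)
    (hsum : ∀ s, ∀ α ∈ En s, (∑ t, P s α t) + b s α + c s α = 1)
    (hexit : ∀ σ : S → Act, (∀ s, σ s ∈ En s) →
      ∀ s : S, ∃ (k : ℕ) (path : ℕ → S), path 0 = s ∧
        (∀ i < k, 0 < P (path i) (σ (path i)) (path (i + 1))) ∧
        0 < b (path k) (σ (path k)) + c (path k) (σ (path k))) :
    MaxPrinciple En P := by
  intro σ hσ d hd s₁
  have : Nonempty S := ⟨s₁⟩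
  obtain ⟨s, hs⟩ := Finite.exists_max d
  refine (hs s₁).trans ?_
  by_contra! hpos
  have hle (x : S) : ∑ t, P x (σ x) t * d t ≤ (∑ t, P x (σ x) t) * d s := by
    rw [Finset.sum_mul]
    exact Finset.sum_le_sum fun t _ => mul_le_mul_of_nonneg_left (hs t) (hP x _ (hσ x) t)
  have hnoexit (x : S) (hx : d x = d s) : b x (σ x) + c x (σ x) ≤ 0 := by
    have h1 := (hd x).trans (hle x)
    have h2 : ∑ t, P x (σ x) t = 1 - (b x (σ x) + c x (σ x)) := by
      linarith [hsum x _ (hσ x)]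
    rw [hx, h2] at h1
    by_contra! h3
    nlinarith [mul_pos h3 hpos]
  have hstep (x y : S) (hx : d x = d s) (hy : 0 < P x (σ x) y) : d y = d s := by
    by_contra hne
    have hlt : d y < d s := lt_of_le_of_ne (hs y) hne
    have h1 : ∑ t, P x (σ x) t * d t < ∑ t, P x (σ x) t * d s :=
      Finset.sum_lt_sum (fun t _ => mul_le_mul_of_nonneg_left (hs t) (hP x _ (hσ x) t))
        ⟨y, Finset.mem_univ _, mul_lt_mul_of_pos_left hlt hy⟩
    rw [← Finset.sum_mul] at h1
    have h2 : ∑ t, P x (σ x) t ≤ 1 := by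
      linarith [hsum x _ (hσ x), hb x _ (hσ x), hc x _ (hσ x)]
    have h3 := hd x
    nlinarith [mul_le_mul_of_nonneg_right h2 hpos.le]
  obtain ⟨k, path, hp0, hp, hk⟩ := hexit σ hσ s
  have hall : ∀ i ≤ k, d (path i) = d s := by
    intro i
    induction i with
    | zero => intro _; rw [hp0]
    | succ i ih => intro hi; exact hstep _ _ (ih (by omega)) (hp i (by omega))
  exact absurd (hnoexit _ (hall k le_rfl)) (not_le.mpr hk)

theorem exists_greatest {T Act : Type} [Fintype T]
    (En : T → Finset Act) (hEn : ∀ s, (En s).Nonempty) (Q : T → Act → T → ℝ) (b : T → Act → ℝ)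
    (hQ : ∀ s, ∀ α ∈ En s, ∀ t, 0 ≤ Q s α t)
    (hb : ∀ s, ∀ α ∈ En s, 0 ≤ b s α)
    (hsum : ∀ s, ∀ α ∈ En s, (∑ t, Q s α t) + b s α ≤ 1)
    (hmp : MaxPrinciple En Q) :
    ∃ z : T → ℝ, (∀ s, ∀ α ∈ En s, z s ≤ (∑ t, Q s α t * z t) + b s α) ∧
      ∀ w : T → ℝ, (∀ s, ∀ α ∈ En s, w s ≤ (∑ t, Q s α t * w t) + b s α) →
        ∀ s, w s ≤ z s := by
  obtain ⟨z, -, hz⟩ := exists_fixedPoint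
    (fun z s => (En s).inf' (hEn s) fun α => (∑ t, Q s α t * z t) + b s α)
    (fun x y hxy s => Finset.inf'_mono_fun fun α hα => by
      gcongr with t
      · exact hQ s α hα t
      · exact hxy t)
    (fun s => Finset.le_inf' _ _ fun α hα => by simpa using hb s α hα)
    (fun s => by
      obtain ⟨α, hα⟩ := hEn s
      exact (Finset.inf'_le _ hα).trans (by simpa using hsum s α hα))
  choose σ hσ hσz using fun s => Finset.exists_mem_eq_inf' (hEn s)
    fun α => (∑ t, Q s α t * z t) + b s α
  refine ⟨z, fun s α hα => ?_, fun w hw s => ?_⟩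
  · exact (congrFun hz s).symm.le.trans (Finset.inf'_le _ hα)
  · refine sub_nonpos.mp (hmp σ hσ (fun s => w s - z s) (fun s => ?_) s)
    have h1 := (congrFun hz s).symm.trans (hσz s)
    have h2 := hw s _ (hσ s)
    simp only [mul_sub, Finset.sum_sub_distrib]
    linarith

theorem exists_least {T Act : Type} [Fintype T]
    (En : T → Finset Act) (hEn : ∀ s, (En s).Nonempty) (Q : T → Act → T → ℝ) (b : T → Act → ℝ)
    (hQ : ∀ s, ∀ α ∈ En s, ∀ t, 0 ≤ Q s α t)
    (hb : ∀ s, ∀ α ∈ En s, 0 ≤ b s α)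
    (hsum : ∀ s, ∀ α ∈ En s, (∑ t, Q s α t) + b s α ≤ 1)
    (hmp : MaxPrinciple En Q) :
    ∃ v : T → ℝ, 0 ≤ v ∧ (∀ s, ∀ α ∈ En s, (∑ t, Q s α t * v t) + b s α ≤ v s) ∧
      ∀ u : T → ℝ, (∀ s, ∀ α ∈ En s, (∑ t, Q s α t * u t) + b s α ≤ u s) →
        ∀ s, v s ≤ u s := by
  obtain ⟨v, hv0, hv⟩ := exists_fixedPoint
    (fun z s => (En s).sup' (hEn s) fun α => (∑ t, Q s α t * z t) + b s α)
    (fun x y hxy s => Finset.sup'_mono_fun fun α hα => by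
      gcongr with t
      · exact hQ s α hα t
      · exact hxy t)
    (fun s => by
      obtain ⟨α, hα⟩ := hEn s
      have h : (0 : ℝ) ≤ (∑ t, Q s α t * (0 : T → ℝ) t) + b s α := by simpa using hb s α hα
      exact h.trans (Finset.le_sup' (fun α => (∑ t, Q s α t * (0 : T → ℝ) t) + b s α) hα))
    (fun s => Finset.sup'_le _ _ fun α hα => by simpa using hsum s α hα)
  choose σ hσ hσv using fun s => Finset.exists_mem_eq_sup' (hEn s)
    fun α => (∑ t, Q s α t * v t) + b s α
  refine ⟨v, hv0, fun s α hα => ?_, fun u hu s => ?_⟩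
  · exact (Finset.le_sup' (fun α => (∑ t, Q s α t * v t) + b s α) hα).trans (congrFun hv s).le
  · refine sub_nonpos.mp (hmp σ hσ (fun s => v s - u s) (fun s => ?_) s)
    have h1 := (congrFun hv s).symm.trans (hσv s)
    have h2 := hu s _ (hσ s)
    simp only [mul_sub, Finset.sum_sub_distrib]
    linarith

/-- A sum over `S` against the extension by zero of a vector on `R` is a sum over `R`. -/
theorem sum_mul_extend {S : Type} [Fintype S] [DecidableEq S] (R : Finset S) (p : S → ℝ)
    (f : {s : S // s ∈ R} → ℝ) :
    ∑ t, p t * (if h : t ∈ R then f ⟨t, h⟩ else 0) = ∑ t : {s : S // s ∈ R}, p t.1 * f t := by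
  rw [← Finset.sum_subset (Finset.subset_univ R) (fun t _ ht => by simp [ht]),
    ← Finset.sum_coe_sort R]
  exact Finset.sum_congr rfl fun t _ => by simp

theorem sum_restrict_le {S : Type} [Fintype S] (R : Finset S) (p : S → ℝ) (hp : ∀ t, 0 ≤ p t) :
    ∑ t : {s : S // s ∈ R}, p t.1 ≤ ∑ t, p t := by
  rw [Finset.sum_coe_sort R p]
  exact Finset.sum_le_sum_of_subset_of_nonneg (Finset.subset_univ R) fun t _ _ => hp t

theorem MaxPrinciple.restrict {S Act : Type} [Fintype S] [DecidableEq S]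
    {En : S → Finset Act} (hEn : ∀ s, (En s).Nonempty) {P : S → Act → S → ℝ}
    (hP : ∀ s, ∀ α ∈ En s, ∀ t, 0 ≤ P s α t)
    (hmp : MaxPrinciple En P) (R : Finset S) :
    MaxPrinciple (T := {s : S // s ∈ R}) (fun s => En s.1) (fun s α t => P s.1 α t.1) := by
  intro σ hσ d hd s
  have hσ' (s : S) : (if h : s ∈ R then σ ⟨s, h⟩ else (hEn s).choose) ∈ En s := by
    split_ifs with h
    · exact hσ ⟨s, h⟩
    · exact (hEn s).choose_spec
  -- Extending `d` itself by zero could break the inequality at states outside `R`, where the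
  -- right-hand side might be negative; the positive part makes it nonnegative.
  have key := hmp _ hσ' (fun t => if h : t ∈ R then max (d ⟨t, h⟩) 0 else 0) (fun x => by
    rw [sum_mul_extend R _ (fun t => max (d t) 0)]
    have hnn : 0 ≤ ∑ t : {s : S // s ∈ R},
        P x (if h : x ∈ R then σ ⟨x, h⟩ else (hEn x).choose) t.1 * max (d t) 0 :=
      Finset.sum_nonneg fun t _ => mul_nonneg (hP x _ (hσ' x) t.1) (le_max_right _ _)
    by_cases hx : x ∈ R
    · simp only [hx, dite_true] at hnn ⊢
      refine max_le ((hd ⟨x, hx⟩).trans (Finset.sum_le_sum fun t _ => ?_)) hnn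
      exact mul_le_mul_of_nonneg_left (le_max_left _ _) (hP x _ (hσ ⟨x, hx⟩) t.1)
    · simpa only [hx, dite_false] using hnn) s.1
  simp only [s.2, dite_true] at key
  exact (le_max_left _ _).trans key

theorem stmt_10
    {S Act : Type} [Fintype S] [DecidableEq S] [Nonempty S]
    [Fintype Act] [DecidableEq Act]
    (s0 : S) (En : S → Finset Act) (hEn : ∀ s, (En s).Nonempty)
    (P : S → Act → S → ℝ) (b c : S → Act → ℝ)
    (hP : ∀ s, ∀ α ∈ En s, ∀ t, 0 ≤ P s α t)
    (hb : ∀ s, ∀ α ∈ En s, 0 ≤ b s α)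
    (hc : ∀ s, ∀ α ∈ En s, 0 ≤ c s α)
    (hsum : ∀ s, ∀ α ∈ En s, (∑ t, P s α t) + b s α + c s α = 1)
    (hexit : ∀ σ : S → Act, (∀ s, σ s ∈ En s) →
      ∀ s : S, ∃ (k : ℕ) (path : ℕ → S), path 0 = s ∧
        (∀ i < k, 0 < P (path i) (σ (path i)) (path (i + 1))) ∧
        0 < b (path k) (σ (path k)) + c (path k) (σ (path k)))
    (R : Finset S) (hs0 : s0 ∈ R) :
    (∃ (zstar : S → ℝ) (wstar : {s : S // s ∈ R} → ℝ),
      ((∀ s, ∀ α ∈ En s, zstar s - ∑ t, P s α t * zstar t ≤ b s α) ∧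
        (∀ z : S → ℝ, (∀ s, ∀ α ∈ En s, z s - ∑ t, P s α t * z t ≤ b s α) →
          ∀ s, z s ≤ zstar s)) ∧
      ((∀ s : {s : S // s ∈ R}, ∀ α ∈ En s.1,
          wstar s ≤ (∑ t : {s : S // s ∈ R}, P s.1 α t.1 * wstar t) + b s.1 α) ∧
        (∀ w : {s : S // s ∈ R} → ℝ,
          (∀ s : {s : S // s ∈ R}, ∀ α ∈ En s.1,
            w s ≤ (∑ t : {s : S // s ∈ R}, P s.1 α t.1 * w t) + b s.1 α) →
          ∀ s, w s ≤ wstar s)) ∧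
      (∀ s : {s : S // s ∈ R}, wstar s ≤ zstar s.1)) ∧
    (∃ (vstar : S → ℝ) (ustar : {s : S // s ∈ R} → ℝ),
      ((∀ s, ∀ α ∈ En s, b s α ≤ vstar s - ∑ t, P s α t * vstar t) ∧
        (∀ z : S → ℝ, (∀ s, ∀ α ∈ En s, b s α ≤ z s - ∑ t, P s α t * z t) →
          ∀ s, vstar s ≤ z s)) ∧
      ((∀ s : {s : S // s ∈ R}, ∀ α ∈ En s.1,
          (∑ t : {s : S // s ∈ R}, P s.1 α t.1 * ustar t) + b s.1 α ≤ ustar s) ∧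
        (∀ u : {s : S // s ∈ R} → ℝ,
          (∀ s : {s : S // s ∈ R}, ∀ α ∈ En s.1,
            (∑ t : {s : S // s ∈ R}, P s.1 α t.1 * u t) + b s.1 α ≤ u s) →
          ∀ s, ustar s ≤ u s)) ∧
      (∀ s : {s : S // s ∈ R}, ustar s ≤ vstar s.1)) := by
  have hmp := le_zero_of_le_sum En P b c hP hb hc hsum hexit
  have hmpR := hmp.restrict hEn hP R
  have hsum1 : ∀ s, ∀ α ∈ En s, (∑ t, P s α t) + b s α ≤ 1 := fun s α hα => by
    linarith [hsum s α hα, hc s α hα]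
  have hsumR : ∀ s : {s : S // s ∈ R}, ∀ α ∈ En s.1,
      (∑ t : {s : S // s ∈ R}, P s.1 α t.1) + b s.1 α ≤ 1 := fun s α hα => by
    linarith [hsum1 s.1 α hα, sum_restrict_le R (P s.1 α) (hP s.1 α hα)]
  constructor
  · obtain ⟨z, hz, hzmax⟩ := exists_greatest En hEn P b hP hb hsum1 hmp
    obtain ⟨w, hw, hwmax⟩ := exists_greatest (T := {s : S // s ∈ R}) (fun s => En s.1)
      (fun s => hEn s.1) (fun s α t => P s.1 α t.1) (fun s => b s.1)
      (fun s α hα t => hP s.1 α hα t.1) (fun s => hb s.1) hsumR hmpR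
    refine ⟨z, w, ⟨fun s α hα => by linarith [hz s α hα], fun y hy => hzmax y fun s α hα => by
      linarith [hy s α hα]⟩, ⟨hw, hwmax⟩, fun s => ?_⟩
    have hw0 : ∀ s, 0 ≤ w s := hwmax (fun _ => 0) fun s α hα => by simpa using hb s.1 α hα
    have key := hzmax (fun t => if h : t ∈ R then w ⟨t, h⟩ else 0) (fun x α hα => by
      rw [sum_mul_extend R (P x α) w]
      by_cases hx : x ∈ R
      · simpa only [hx, dite_true] using hw ⟨x, hx⟩ α hα
      · simp only [hx, dite_false]
        exact add_nonneg (Finset.sum_nonneg fun t _ => mul_nonneg (hP x α hα t.1) (hw0 t))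
          (hb x α hα)) s.1
    simpa only [s.2, dite_true] using key
  · obtain ⟨v, hv0, hv, hvmin⟩ := exists_least En hEn P b hP hb hsum1 hmp
    obtain ⟨u, -, hu, humin⟩ := exists_least (T := {s : S // s ∈ R}) (fun s => En s.1)
      (fun s => hEn s.1) (fun s α t => P s.1 α t.1) (fun s => b s.1)
      (fun s α hα t => hP s.1 α hα t.1) (fun s => hb s.1) hsumR hmpR
    refine ⟨v, u, ⟨fun s α hα => by linarith [hv s α hα], fun y hy => hvmin y fun s α hα => by
      linarith [hy s α hα]⟩, ⟨hu, humin⟩, ?_⟩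
    refine humin (fun s => v s.1) fun s α hα => ?_
    have h := sum_restrict_le R (fun t => P s.1 α t * v t)
      fun t => mul_nonneg (hP s.1 α hα t) (hv0 t)
    linarith [hv s.1 α hα]
end

section
/- Let n, m be positive integers, A ∈ ℝ^{m×n}, b ∈ ℝ^m, and suppose the polyhedron P = { x ∈ ℝ^n : A x ≤ b and x ≥ 0 } is bounded. Then for every p ∈ P there exists an extreme point v of P with supp(v) ⊆ supp(p), where supp(x) = { i : x(i) ≠ 0 }. -/
/-!
The points of `P` whose support lies in `supp p` form a face of `P`: they are cut out by the
equalities `x i = 0` for `p i = 0`, and each inequality `0 ≤ x i` is valid on `P`. This face is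
nonempty (it contains `p`) and compact, so by the Krein-Milman lemma
(`IsCompact.extremePoints_nonempty`) it has an extreme point, and an extreme point of a face is an
extreme point of `P`.
-/

/-- Vanishing on a set `Z` of coordinates cuts out a face of any set of nonnegative vectors. -/
theorem isExtreme_vanishing {n : ℕ} {P : Set (Fin n → ℝ)} (hP : ∀ x ∈ P, ∀ i, 0 ≤ x i)
    (Z : Set (Fin n)) : IsExtreme ℝ P {x ∈ P | ∀ i ∈ Z, x i = 0} := by
  refine ⟨fun x hx => hx.1, ?_⟩
  rintro x hx y hy z ⟨-, hz⟩ ⟨s, t, hs, ht, -, rfl⟩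
  refine ⟨hx, fun i hi => ?_⟩
  have h : s * x i + t * y i = 0 := hz i hi
  have hsx := mul_nonneg hs.le (hP x hx i)
  have hty := mul_nonneg ht.le (hP y hy i)
  exact (mul_eq_zero.mp (by linarith : s * x i = 0)).resolve_left hs.ne'

theorem stmt_11 (n m : ℕ) (hn : 0 < n) (hm : 0 < m)
    (A : Fin m → Fin n → ℝ) (b : Fin m → ℝ)
    (hbdd : Bornology.IsBounded
      {x : Fin n → ℝ | (∀ j, ∑ i, A j i * x i ≤ b j) ∧ ∀ i, 0 ≤ x i}) :
    ∀ p ∈ {x : Fin n → ℝ | (∀ j, ∑ i, A j i * x i ≤ b j) ∧ ∀ i, 0 ≤ x i},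
      ∃ v ∈ Set.extremePoints ℝ
          {x : Fin n → ℝ | (∀ j, ∑ i, A j i * x i ≤ b j) ∧ ∀ i, 0 ≤ x i},
        {i | v i ≠ 0} ⊆ {i | p i ≠ 0} := by
  intro p hp
  set P := {x : Fin n → ℝ | (∀ j, ∑ i, A j i * x i ≤ b j) ∧ ∀ i, 0 ≤ x i} with hPdef
  have hface := isExtreme_vanishing (P := P) (fun x hx => hx.2) {i | p i = 0}
  have hclosed : IsClosed {x ∈ P | ∀ i ∈ {i | p i = 0}, x i = 0} := by
    simp only [hPdef, Set.mem_ofPred_eq, Set.ofPred_and, Set.ofPred_forall]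
    refine .inter (.inter ?_ ?_) ?_
    · exact isClosed_iInter fun j => isClosed_le (by fun_prop) (by fun_prop)
    · exact isClosed_iInter fun i => isClosed_le (by fun_prop) (by fun_prop)
    · exact isClosed_iInter fun i => isClosed_iInter fun _ =>
        isClosed_eq (by fun_prop) (by fun_prop)
  have hcompact := Metric.isCompact_of_isClosed_isBounded hclosed (hbdd.subset hface.1)
  obtain ⟨v, hv⟩ := hcompact.extremePoints_nonempty ⟨p, hp, fun _ hi => hi⟩
  exact ⟨v, hface.extremePoints_subset_extremePoints hv, fun i hvi hpi => hvi (hv.1.2 i hpi)⟩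
end

section
/- Let n, m be positive integers, A ∈ ℝ^{m×n}, b ∈ ℝ^m, and suppose the polyhedron P = { x ∈ ℝ^n : A x ≤ b and x ≥ 0 } is nonempty and bounded. Then: (i) the minimum of |supp(x)| over all x ∈ P equals the minimum of |supp(v)| over all extreme points v of P; (ii) an extreme point v of P has a maximal number of zero coordinates among all extreme points of P if and only if |supp(v)| = min_{x ∈ P} |supp(x)|. -/
/-!
For `x` in `P`, the set `F` of all points of `P` vanishing wherever `x` vanishes is a face of `P`,
because nonnegative numbers with a positive combination equal to zero are zero. It is nonempty and
compact, so by the Krein–Milman lemma it has an extreme point, which is then an extreme point of `P`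
with support contained in that of `x` (`exists_extremePoint_supp_subset`). Hence the smallest
support size over `P` is attained at an extreme point. The second claim follows by counting, since
zero and nonzero coordinates add up to `n`.
-/

theorem exists_extremePoint_supp_subset {n : ℕ} {P : Set (Fin n → ℝ)} (hc : IsCompact P)
    (h0 : ∀ x ∈ P, ∀ i, 0 ≤ x i) {x : Fin n → ℝ} (hx : x ∈ P) :
    ∃ v ∈ Set.extremePoints ℝ P, ∀ i, x i = 0 → v i = 0 := by
  have hF : IsClosed {y : Fin n → ℝ | ∀ i, x i = 0 → y i = 0} := by
    simp only [Set.ofPred_forall]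
    exact isClosed_iInter fun i => isClosed_iInter fun _ =>
      isClosed_eq (continuous_apply i) continuous_const
  obtain ⟨v, hv⟩ := (hc.inter_right hF).extremePoints_nonempty (E := Fin n → ℝ)
    ⟨x, hx, fun i hi => hi⟩
  have hext : IsExtreme ℝ P (P ∩ {y : Fin n → ℝ | ∀ i, x i = 0 → y i = 0}) := by
    refine ⟨Set.inter_subset_left, ?_⟩
    rintro y hy z hz w ⟨_, hw⟩ ⟨a, c, ha, hc', _, rfl⟩
    refine ⟨hy, fun i hi => ?_⟩
    have h := hw i hi
    simp only [Pi.add_apply, Pi.smul_apply, smul_eq_mul] at h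
    have h1 := mul_nonneg ha.le (h0 y hy i)
    have h2 := mul_nonneg hc'.le (h0 z hz i)
    have h3 : a * y i = 0 := by linarith
    exact (mul_eq_zero.1 h3).resolve_left ha.ne'
  exact ⟨v, hext.extremePoints_subset_extremePoints hv, hv.1.2⟩

theorem isClosed_nonneg_polyhedron {n m : ℕ} (A : Fin m → Fin n → ℝ) (b : Fin m → ℝ) :
    IsClosed {x : Fin n → ℝ | (∀ j, ∑ i, A j i * x i ≤ b j) ∧ ∀ i, 0 ≤ x i} := by
  simp only [Set.ofPred_and, Set.ofPred_forall]
  refine IsClosed.inter (isClosed_iInter fun j => isClosed_le (by fun_prop) continuous_const)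
    (isClosed_iInter fun i => isClosed_le continuous_const (by fun_prop))


open Finset

theorem stmt_12 (n m : ℕ) (hn : 0 < n) (hm : 0 < m)
    (A : Fin m → Fin n → ℝ) (b : Fin m → ℝ)
    (hne : {x : Fin n → ℝ | (∀ j, ∑ i, A j i * x i ≤ b j) ∧ ∀ i, 0 ≤ x i}.Nonempty)
    (hbdd : Bornology.IsBounded
      {x : Fin n → ℝ | (∀ j, ∑ i, A j i * x i ≤ b j) ∧ ∀ i, 0 ≤ x i}) :
    (sInf {k : ℕ | ∃ x ∈ {x : Fin n → ℝ | (∀ j, ∑ i, A j i * x i ≤ b j) ∧ ∀ i, 0 ≤ x i},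
        (univ.filter fun i => x i ≠ 0).card = k} =
      sInf {k : ℕ | ∃ v ∈ Set.extremePoints ℝ
          {x : Fin n → ℝ | (∀ j, ∑ i, A j i * x i ≤ b j) ∧ ∀ i, 0 ≤ x i},
        (univ.filter fun i => v i ≠ 0).card = k}) ∧
    (∀ v ∈ Set.extremePoints ℝ
        {x : Fin n → ℝ | (∀ j, ∑ i, A j i * x i ≤ b j) ∧ ∀ i, 0 ≤ x i},
      ((∀ w ∈ Set.extremePoints ℝ
            {x : Fin n → ℝ | (∀ j, ∑ i, A j i * x i ≤ b j) ∧ ∀ i, 0 ≤ x i},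
          (univ.filter fun i => w i = 0).card ≤ (univ.filter fun i => v i = 0).card) ↔
        (univ.filter fun i => v i ≠ 0).card =
          sInf {k : ℕ | ∃ x ∈ {x : Fin n → ℝ | (∀ j, ∑ i, A j i * x i ≤ b j) ∧ ∀ i, 0 ≤ x i},
            (univ.filter fun i => x i ≠ 0).card = k})) := by
  have h0 : ∀ x ∈ {x : Fin n → ℝ | (∀ j, ∑ i, A j i * x i ≤ b j) ∧ ∀ i, 0 ≤ x i},
      ∀ i, 0 ≤ x i := fun x hx => hx.2
  have hc := Metric.isCompact_of_isClosed_isBounded (isClosed_nonneg_polyhedron A b) hbdd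
  generalize {x : Fin n → ℝ | (∀ j, ∑ i, A j i * x i ≤ b j) ∧ ∀ i, 0 ≤ x i} = P at *
  have key : ∀ x ∈ P, ∃ v ∈ Set.extremePoints ℝ P,
      (univ.filter fun i => v i ≠ 0).card ≤ (univ.filter fun i => x i ≠ 0).card := by
    intro x hx
    obtain ⟨v, hv, hvx⟩ := exists_extremePoint_supp_subset hc h0 hx
    refine ⟨v, hv, card_le_card fun i hi => ?_⟩
    simp only [mem_filter, mem_univ, true_and] at hi ⊢
    exact fun h => hi (hvx i h)
  have hcount : ∀ x : Fin n → ℝ,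
      (univ.filter fun i => x i = 0).card + (univ.filter fun i => x i ≠ 0).card = n := by
    intro x
    simpa using card_filter_add_card_filter_not (s := (univ : Finset (Fin n))) (fun i => x i = 0)
  -- A point of minimal support; nonemptiness keeps both infima in `ℕ` from being the junk value.
  obtain ⟨x, hx, hxk⟩ := Nat.sInf_mem (s := {k : ℕ | ∃ x ∈ P,
    (univ.filter fun i => x i ≠ 0).card = k}) (hne.imp' _ fun x hx => ⟨x, hx, rfl⟩)
  have hle : ∀ y ∈ P, sInf {k : ℕ | ∃ x ∈ P, (univ.filter fun i => x i ≠ 0).card = k} ≤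
      (univ.filter fun i => y i ≠ 0).card := fun y hy => Nat.sInf_le ⟨y, hy, rfl⟩
  obtain ⟨u, hu, hux⟩ := key x hx
  refine ⟨le_antisymm ?_ ?_, fun v hv => ⟨fun h => ?_, fun h w hw => ?_⟩⟩
  · obtain ⟨w, hw, hwk⟩ := Nat.sInf_mem (s := {k : ℕ | ∃ v ∈ Set.extremePoints ℝ P,
      (univ.filter fun i => v i ≠ 0).card = k}) ⟨_, u, hu, rfl⟩
    exact hwk ▸ hle w hw.1
  · rw [← hxk]
    exact le_trans (Nat.sInf_le ⟨u, hu, rfl⟩) hux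
  · have h1 := h u hu
    have h2 := hle v hv.1
    have h3 := hcount u
    have h4 := hcount v
    omega
  · have h2 := hle w hw.1
    have h3 := hcount w
    have h4 := hcount v
    omega
end

section
/- Let G be a finite simple graph with vertex set V, and let k ≥ 3 be a natural number. Then G contains a clique of size k if and only if there exist a set V' ⊆ V of vertices and a set E' of edges of G such that |V'| + |E'| ≤ k + k(k−1)/2 and ∑_{e ∈ E'} |{ v ∈ V' : v is an endpoint of e }| ≥ k(k−1). -/
/-!
Write `P` for the set of unordered pairs of distinct vertices of `V'`, so `|P| = p(p-1)/2` with
`p = |V'|`. A clique `t` of size `k` yields the witness `V' = t`, `E' = P`.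

Conversely, an edge meets `V'` in at most one vertex unless it lies in `P`, so the incidence sum is
at most `|E'| + |E' ∩ P|` (`card_endpoints_le`).
* If `p ≥ k`, then `|E'| ≤ k(k-1)/2 - (p - k)`, and the incidence bound forces `p = k` and
  `|E' ∩ P| ≥ k(k-1)/2 = |P|`. Hence `P ⊆ E'`, and `V'` is a clique of size `k`.
* If `0 < p < k`, then the incidence sum is at most `k + k(k-1)/2 - p + p(p-1)/2`, which is less
  than `k(k-1)` because `p(p-3) < k(k-3)`.
* If `p = 0`, the incidence sum is `0`. This case is separate because `p(p-3) < k(k-3)` fails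
  at `p = 0`, `k = 3`.
-/

open Finset

/-- The unordered pairs of distinct elements of `s`. -/
def pairs {V : Type} [DecidableEq V] (s : Finset V) : Finset (Sym2 V) :=
  s.offDiag.image Sym2.mk.uncurry

theorem mk_mem_pairs {V : Type} [DecidableEq V] (s : Finset V) (a b : V) :
    s(a, b) ∈ pairs s ↔ a ∈ s ∧ b ∈ s ∧ a ≠ b := by
  simp only [pairs, mem_image, mem_offDiag, Prod.exists, Function.uncurry_apply_pair, Sym2.eq_iff]
  grind

theorem card_pairs {V : Type} [DecidableEq V] (s : Finset V) :
    (pairs s).card = s.card * (s.card - 1) / 2 := by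
  rw [← Nat.choose_two_right]
  exact Sym2.card_image_offDiag s

theorem card_endpoints_of_mem_pairs {V : Type} [DecidableEq V] (s : Finset V) (e : Sym2 V)
    (he : e ∈ pairs s) : (s.filter fun v => v ∈ e).card = 2 := by
  induction e using Sym2.ind with
  | _ a b =>
    obtain ⟨ha, hb, hab⟩ := (mk_mem_pairs s a b).1 he
    have : (s.filter fun v => v ∈ s(a, b)) = {a, b} := by
      ext v; simp only [mem_filter, Sym2.mem_iff, mem_insert, mem_singleton]; grind
    rw [this, card_pair hab]

theorem card_endpoints_le {V : Type} [DecidableEq V] (s : Finset V) (e : Sym2 V)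
    (he : ¬ e.IsDiag) :
    (s.filter fun v => v ∈ e).card ≤ 1 + if e ∈ pairs s then 1 else 0 := by
  split_ifs with h
  · exact (card_endpoints_of_mem_pairs s e h).le
  · rw [add_zero, card_le_one]
    induction e using Sym2.ind with
    | _ a b =>
      rw [mk_mem_pairs] at h
      simp only [Sym2.mk_isDiag_iff] at he
      simp only [mem_filter, Sym2.mem_iff]
      grind

theorem stmt_14 {V : Type} [Fintype V] [DecidableEq V]
    (G : SimpleGraph V) [DecidableRel G.Adj] (k : ℕ) (hk : 3 ≤ k) :
    (∃ t : Finset V, G.IsNClique k t) ↔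
      ∃ (V' : Finset V) (E' : Finset (Sym2 V)),
        E' ⊆ G.edgeFinset ∧
        V'.card + E'.card ≤ k + k * (k - 1) / 2 ∧
        k * (k - 1) ≤ ∑ e ∈ E', (V'.filter fun v => v ∈ e).card := by
  have two_mul_half (n : ℕ) : n * (n - 1) / 2 * 2 = n * (n - 1) :=
    Nat.div_mul_cancel (Nat.even_mul_pred_self n).two_dvd
  constructor
  · rintro ⟨t, ht, rfl⟩
    refine ⟨t, pairs t, ?_, by rw [card_pairs], ?_⟩
    · intro e he
      induction e using Sym2.ind with
      | _ a b =>
        obtain ⟨ha, hb, hab⟩ := (mk_mem_pairs t a b).1 he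
        simpa using ht ha hb hab
    · rw [sum_congr rfl (card_endpoints_of_mem_pairs t), sum_const, smul_eq_mul, card_pairs,
        two_mul_half]
  · rintro ⟨V', E', hE, hcard, hsum⟩
    have hS : ∑ e ∈ E', (V'.filter fun v => v ∈ e).card
        ≤ E'.card + (E'.filter (· ∈ pairs V')).card := by
      calc _ ≤ ∑ e ∈ E', (1 + if e ∈ pairs V' then 1 else 0) :=
            sum_le_sum fun e he => card_endpoints_le V' e
              (G.not_isDiag_of_mem_edgeSet (SimpleGraph.mem_edgeFinset.1 (hE he)))
        _ = _ := by rw [sum_add_distrib, card_filter]; simp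
    have hsubE : (E'.filter (· ∈ pairs V')).card ≤ E'.card := card_filter_le _ _
    have hsub : E'.filter (· ∈ pairs V') ⊆ pairs V' := fun e he => (mem_filter.1 he).2
    have hsubP := card_le_card hsub
    have hP := card_pairs V'
    have h2k := two_mul_half k
    have h2p := two_mul_half V'.card
    rcases le_or_gt k V'.card with hp | hp
    · have hpk : V'.card = k := by omega
      have heq : E'.filter (· ∈ pairs V') = pairs V' := by
        refine eq_of_subset_of_card_le hsub ?_
        rw [hP, hpk]
        omega
      refine ⟨V', ?_, hpk⟩
      intro a ha b hb hab
      have hmem := (mk_mem_pairs V' a b).2 ⟨ha, hb, hab⟩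
      rw [← heq] at hmem
      simpa using hE (mem_filter.1 hmem).1
    · exfalso
      rcases Nat.eq_zero_or_pos V'.card with h0 | h0
      · rw [card_eq_zero] at h0
        subst h0
        have : 0 < k * (k - 1) := Nat.mul_pos (by omega) (by omega)
        simp at hsum
        omega
      · -- With `p = q + 1` and `k = q + d + 2` natural subtraction disappears.
        obtain ⟨q, hq⟩ : ∃ q, V'.card = q + 1 := ⟨V'.card - 1, by omega⟩
        obtain ⟨d, rfl⟩ : ∃ d, k = q + d + 2 := ⟨k - q - 2, by omega⟩
        rw [hq] at hP hcard h2p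
        simp only [Nat.add_sub_cancel, show q + d + 2 - 1 = q + d + 1 by omega] at *
        have key : (q + 1) * q + 2 * (q + d + 2) < (q + d + 2) * (q + d + 1) + 2 * (q + 1) := by
          nlinarith [Nat.zero_le (q * d), Nat.zero_le (d * d)]
        omega
end

section
/- Let S be a finite nonempty set and Q ∈ ℝ^{S×S} a matrix with Q(s,t) ≥ 0 for all s, t and ∑_{t∈S} Q(s,t) ≤ 1 for all s. Assume that for every s ∈ S there exist a natural number n and a state t ∈ S such that Q^n(s,t) > 0 and ∑_{u∈S} Q(t,u) < 1. Then Q^n → 0 as n → ∞ (entrywise). -/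
/-!
The row sums `(Q ^ n *ᵥ 1) s` (the probabilities of not having been absorbed after `n` steps) are
nonnegative and antitone in `n`, so they converge to some `v ≥ 0`, and `v` is harmonic:
`Q ^ n *ᵥ v = v` for all `n`. A maximum principle gives `v = 0`: if `M = max v > 0` is attained at
`s`, choose `n` and `t` with `Q ^ n s t > 0` and `t` of row sum `< 1`. Then
`v t = (Q *ᵥ v) t ≤ M * ∑ u, Q t u < M`, hence `M = v s = (Q ^ n *ᵥ v) s < M`, a contradiction.
The entries of `Q ^ n` are squeezed between `0` and the row sums.
-/

open Filter

section Substochastic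

variable {S : Type} [Fintype S] [DecidableEq S] {Q : Matrix S S ℝ}

lemma pow_entry_nonneg (hQ0 : ∀ s t, 0 ≤ Q s t) (n : ℕ) : ∀ s t, 0 ≤ (Q ^ n) s t := by
  induction n with
  | zero =>
    intro s t
    rw [pow_zero, Matrix.one_apply]
    split_ifs <;> norm_num
  | succ n ih =>
    intro s t
    rw [pow_succ, Matrix.mul_apply]
    exact Finset.sum_nonneg fun u _ => mul_nonneg (ih s u) (hQ0 u t)

lemma pow_rowSum_antitone (hQ0 : ∀ s t, 0 ≤ Q s t) (hQ1 : ∀ s, ∑ t, Q s t ≤ 1) (s : S) :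
    Antitone fun n : ℕ => ∑ t, (Q ^ n) s t := by
  refine antitone_nat_of_succ_le fun n => ?_
  simp only [pow_succ, Matrix.mul_apply]
  rw [Finset.sum_comm]
  refine Finset.sum_le_sum fun u _ => ?_
  rw [← Finset.mul_sum]
  exact mul_le_of_le_one_right (pow_entry_nonneg hQ0 n s u) (hQ1 u)

lemma pow_rowSum_le_one (hQ0 : ∀ s t, 0 ≤ Q s t) (hQ1 : ∀ s, ∑ t, Q s t ≤ 1) (n : ℕ) (s : S) :
    ∑ t, (Q ^ n) s t ≤ 1 := by
  simpa [Matrix.one_apply] using pow_rowSum_antitone hQ0 hQ1 s (Nat.zero_le n)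

/-- The limit of the row sums of `Q ^ m` is harmonic for every power of `Q`. -/
lemma limit_harmonic {v : S → ℝ}
    (hv : ∀ s, Tendsto (fun m : ℕ => ∑ t, (Q ^ m) s t) atTop (nhds (v s))) (n : ℕ) (s : S) :
    v s = ∑ t, (Q ^ n) s t * v t := by
  have h1 : Tendsto (fun m : ℕ => ∑ t, (Q ^ (m + n)) s t) atTop (nhds (v s)) :=
    (hv s).comp (tendsto_add_atTop_nat n)
  have h2 : Tendsto (fun m : ℕ => ∑ t, (Q ^ n) s t * ∑ u, (Q ^ m) t u) atTop
      (nhds (∑ t, (Q ^ n) s t * v t)) :=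
    tendsto_finsetSum _ fun t _ => (hv t).const_mul _
  refine tendsto_nhds_unique h1 (h2.congr fun m => ?_)
  simp only [add_comm m n, pow_add, Matrix.mul_apply, Finset.mul_sum]
  exact Finset.sum_comm

/-- Maximum principle: a vector harmonic for all powers of `Q` is nonpositive when every state
reaches one of row sum `< 1`. -/
lemma harmonic_nonpos [Nonempty S] (hQ0 : ∀ s t, 0 ≤ Q s t) (hQ1 : ∀ s, ∑ t, Q s t ≤ 1)
    (hreach : ∀ s : S, ∃ (n : ℕ) (t : S), 0 < (Q ^ n) s t ∧ ∑ u, Q t u < 1) {v : S → ℝ}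
    (hv : ∀ (n : ℕ) (s : S), v s = ∑ t, (Q ^ n) s t * v t) (s : S) : v s ≤ 0 := by
  obtain ⟨s₀, hs₀⟩ := Finite.exists_max v
  refine (hs₀ s).trans ?_
  by_contra! hpos
  obtain ⟨n, t, hnt, ht⟩ := hreach s₀
  have hlt : v t < v s₀ :=
    calc v t = ∑ u, Q t u * v u := by simpa using hv 1 t
      _ ≤ ∑ u, Q t u * v s₀ :=
        Finset.sum_le_sum fun u _ => mul_le_mul_of_nonneg_left (hs₀ u) (hQ0 t u)
      _ = (∑ u, Q t u) * v s₀ := (Finset.sum_mul ..).symm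
      _ < v s₀ := mul_lt_of_lt_one_left hpos ht
  have : v s₀ < v s₀ :=
    calc v s₀ = ∑ u, (Q ^ n) s₀ u * v u := hv n s₀
      _ < ∑ u, (Q ^ n) s₀ u * v s₀ :=
        Finset.sum_lt_sum
          (fun u _ => mul_le_mul_of_nonneg_left (hs₀ u) (pow_entry_nonneg hQ0 n s₀ u))
          ⟨t, Finset.mem_univ t, mul_lt_mul_of_pos_left hlt hnt⟩
      _ = (∑ u, (Q ^ n) s₀ u) * v s₀ := (Finset.sum_mul ..).symm
      _ ≤ v s₀ := mul_le_of_le_one_left hpos.le (pow_rowSum_le_one hQ0 hQ1 n s₀)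
  exact lt_irrefl _ this

end Substochastic

theorem stmt_16 {S : Type} [Fintype S] [DecidableEq S] [Nonempty S]
    (Q : Matrix S S ℝ)
    (hQ0 : ∀ s t, 0 ≤ Q s t)
    (hQ1 : ∀ s, ∑ t, Q s t ≤ 1)
    (hreach : ∀ s : S, ∃ (n : ℕ) (t : S), 0 < (Q ^ n) s t ∧ ∑ u, Q t u < 1) :
    ∀ s t, Tendsto (fun n : ℕ => (Q ^ n) s t) atTop (nhds 0) := by
  intro s t
  have hnn : ∀ (s : S) (n : ℕ), 0 ≤ ∑ t, (Q ^ n) s t := fun s n =>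
    Finset.sum_nonneg fun t _ => pow_entry_nonneg hQ0 n s t
  have hconv : ∀ s, ∃ l, Tendsto (fun n : ℕ => ∑ t, (Q ^ n) s t) atTop (nhds l) := fun s =>
    ⟨_, tendsto_atTop_ciInf (pow_rowSum_antitone hQ0 hQ1 s)
      ⟨0, Set.forall_mem_range.2 (hnn s)⟩⟩
  choose v hv using hconv
  have hv0 : v s = 0 :=
    le_antisymm (harmonic_nonpos hQ0 hQ1 hreach (limit_harmonic hv) s)
      (ge_of_tendsto' (hv s) (hnn s))
  exact squeeze_zero (fun n => pow_entry_nonneg hQ0 n s t)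
    (fun n => Finset.single_le_sum (f := fun t => (Q ^ n) s t)
      (fun u _ => pow_entry_nonneg hQ0 n s u) (Finset.mem_univ t))
    (hv0 ▸ hv s)
end
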